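/- arXiv:2306.14561 — 2 statements merged into one kernel-verified Lean document; each statement's English description precedes it below -/
import Mathlib

section
/- Chain of inclusions of feasible sets (Proposition 2): for every performance level γ ≥ γ_f, one has 𝒵_f ⊆ X_1^γ, and X_T^γ ⊆ X_{T+1}^γ for every horizon length T ≥ 1. -/
open Matrix

noncomputable section

/-- Index type for stacked state / disturbance trajectories over horizon `T`:
block index in `Fin (T+1)`, coordinate in `Fin n`. -/
abbrev SIdx (n T : ℕ) := Fin (T + 1) × Fin n

/-- Index type for stacked input trajectories over horizon `T`. -/
abbrev UIdx (m T : ℕ) := Fin T × Fin m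

/-- The block-downshift operator `𝐙`. -/
def Zshift (n T : ℕ) : Matrix (SIdx n T) (SIdx n T) ℝ :=
  Matrix.of fun p q => if (p.1 : ℕ) = (q.1 : ℕ) + 1 ∧ p.2 = q.2 then (1 : ℝ) else 0

/-- `𝐀 = I_{T+1} ⊗ A`. -/
def bigA (n T : ℕ) (A : Matrix (Fin n) (Fin n) ℝ) : Matrix (SIdx n T) (SIdx n T) ℝ :=
  Matrix.of fun p q => if p.1 = q.1 then A p.2 q.2 else 0

/-- `𝐁 = col(I_T ⊗ B, 0)`. -/
def bigB (n m T : ℕ) (B : Matrix (Fin n) (Fin m) ℝ) : Matrix (SIdx n T) (UIdx m T) ℝ :=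
  Matrix.of fun p q => if (p.1 : ℕ) = (q.1 : ℕ) then B p.2 q.2 else 0

/-- `𝐐 = blkdiag(I_T ⊗ Q, 0)`. -/
def bigQ (n T : ℕ) (Q : Matrix (Fin n) (Fin n) ℝ) : Matrix (SIdx n T) (SIdx n T) ℝ :=
  Matrix.of fun p q => if p.1 = q.1 ∧ (p.1 : ℕ) < T then Q p.2 q.2 else 0

/-- `𝐑 = I_T ⊗ R`. -/
def bigR (m T : ℕ) (R : Matrix (Fin m) (Fin m) ℝ) : Matrix (UIdx m T) (UIdx m T) ℝ :=
  Matrix.of fun p q => if p.1 = q.1 then R p.2 q.2 else 0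

/-- `𝐅 = (I − 𝐙𝐀)⁻¹𝐙𝐁`. -/
def bigF (n m T : ℕ) (A : Matrix (Fin n) (Fin n) ℝ) (B : Matrix (Fin n) (Fin m) ℝ) :
    Matrix (SIdx n T) (UIdx m T) ℝ :=
  (1 - Zshift n T * bigA n T A)⁻¹ * (Zshift n T * bigB n m T B)

/-- `𝐆 = (I − 𝐙𝐀)⁻¹`. -/
def bigG (n T : ℕ) (A : Matrix (Fin n) (Fin n) ℝ) : Matrix (SIdx n T) (SIdx n T) ℝ :=
  (1 - Zshift n T * bigA n T A)⁻¹

/-- The control cost `J_T(u, δ) = xᵀ𝐐x + uᵀ𝐑u` with `x = 𝐅u + 𝐆δ`. -/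
def costJ (n m T : ℕ) (A : Matrix (Fin n) (Fin n) ℝ) (B : Matrix (Fin n) (Fin m) ℝ)
    (Q : Matrix (Fin n) (Fin n) ℝ) (R : Matrix (Fin m) (Fin m) ℝ)
    (u : UIdx m T → ℝ) (δ : SIdx n T → ℝ) : ℝ :=
  let x := bigF n m T A B *ᵥ u + bigG n T A *ᵥ δ
  x ⬝ᵥ (bigQ n T Q *ᵥ x) + u ⬝ᵥ (bigR m T R *ᵥ u)

/-- `𝐏 = 𝐑 + 𝐅ᵀ𝐐𝐅`. -/
def bigP (n m T : ℕ) (A : Matrix (Fin n) (Fin n) ℝ) (B : Matrix (Fin n) (Fin m) ℝ)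
    (Q : Matrix (Fin n) (Fin n) ℝ) (R : Matrix (Fin m) (Fin m) ℝ) :
    Matrix (UIdx m T) (UIdx m T) ℝ :=
  bigR m T R + (bigF n m T A B)ᵀ * bigQ n T Q * bigF n m T A B

/-- The clairvoyant cost matrix `𝐂_T = 𝐆ᵀ𝐐(I + 𝐅𝐑⁻¹𝐅ᵀ𝐐)⁻¹𝐆`. -/
def Cmat (n m T : ℕ) (A : Matrix (Fin n) (Fin n) ℝ) (B : Matrix (Fin n) (Fin m) ℝ)
    (Q : Matrix (Fin n) (Fin n) ℝ) (R : Matrix (Fin m) (Fin m) ℝ) :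
    Matrix (SIdx n T) (SIdx n T) ℝ :=
  (bigG n T A)ᵀ * bigQ n T Q *
    (1 + bigF n m T A B * (bigR m T R)⁻¹ * (bigF n m T A B)ᵀ * bigQ n T Q)⁻¹ * bigG n T A

/-- Assemble `δ = col(x₀, w₀, …, w_{T−1})`. -/
def assemble (n T : ℕ) (x0 : Fin n → ℝ) (w : Fin T × Fin n → ℝ) : SIdx n T → ℝ :=
  fun p => if h : (p.1 : ℕ) = 0 then x0 p.2
    else w (⟨(p.1 : ℕ) - 1, by have := p.1.isLt; omega⟩, p.2)

/-- `𝐐̄ = blkdiag(I_T ⊗ Q, P)`. -/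
def bigQbar (n T : ℕ) (Q P : Matrix (Fin n) (Fin n) ℝ) : Matrix (SIdx n T) (SIdx n T) ℝ :=
  Matrix.of fun p q =>
    if p.1 = q.1 then (if (p.1 : ℕ) < T then Q p.2 q.2 else P p.2 q.2) else 0

/-- `𝐒̄ = blkdiag(𝐐̄, 𝐑)`. -/
def bigS (n m T : ℕ) (Q P : Matrix (Fin n) (Fin n) ℝ) (R : Matrix (Fin m) (Fin m) ℝ) :
    Matrix (SIdx n T ⊕ UIdx m T) (SIdx n T ⊕ UIdx m T) ℝ :=
  Matrix.fromBlocks (bigQbar n T Q P) 0 0 (bigR m T R)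

/-- The regret `Reg_T(Φx, Φu, γ, δ)` for `δ = col(x₀, w)`:
`col(Φxδ, Φuδ)ᵀ𝐒̄ col(Φxδ, Φuδ) − δᵀ𝐂_Tδ − γ²wᵀw`. -/
def RegT (n m T : ℕ) (A : Matrix (Fin n) (Fin n) ℝ) (B : Matrix (Fin n) (Fin m) ℝ)
    (Q : Matrix (Fin n) (Fin n) ℝ) (R : Matrix (Fin m) (Fin m) ℝ)
    (P : Matrix (Fin n) (Fin n) ℝ) (γ : ℝ)
    (Φx : Matrix (SIdx n T) (SIdx n T) ℝ) (Φu : Matrix (UIdx m T) (SIdx n T) ℝ)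
    (x0 : Fin n → ℝ) (w : Fin T × Fin n → ℝ) : ℝ :=
  let δ := assemble n T x0 w
  let z : SIdx n T ⊕ UIdx m T → ℝ := Sum.elim (Φx *ᵥ δ) (Φu *ᵥ δ)
  z ⬝ᵥ (bigS n m T Q P R *ᵥ z) - δ ⬝ᵥ (Cmat n m T A B Q R *ᵥ δ) - γ ^ 2 * (w ⬝ᵥ w)
/-- A pair of closed-loop responses is causal if both matrices are block lower
triangular (all blocks strictly above the block diagonal vanish). -/
def causalPair (n m T : ℕ) (Φx : Matrix (SIdx n T) (SIdx n T) ℝ)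
    (Φu : Matrix (UIdx m T) (SIdx n T) ℝ) : Prop :=
  (∀ p q : SIdx n T, (p.1 : ℕ) < (q.1 : ℕ) → Φx p q = 0) ∧
  (∀ (p : UIdx m T) (q : SIdx n T), (p.1 : ℕ) < (q.1 : ℕ) → Φu p q = 0)

/-- Achievability: `(I − 𝐙𝐀)Φx − 𝐙𝐁Φu = I`. -/
def achievablePair (n m T : ℕ) (A : Matrix (Fin n) (Fin n) ℝ) (B : Matrix (Fin n) (Fin m) ℝ)
    (Φx : Matrix (SIdx n T) (SIdx n T) ℝ) (Φu : Matrix (UIdx m T) (SIdx n T) ℝ) : Prop :=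
  (1 - Zshift n T * bigA n T A) * Φx - Zshift n T * bigB n m T B * Φu = 1

/-- Safety: for every disturbance sequence with components in `𝒲`, the closed-loop state
and input trajectories satisfy `(x_t, u_t) ∈ 𝒵` for `t = 0, …, T−1` and `x_T ∈ 𝒵_f`. -/
def safePair (n m T : ℕ) (W : Set (Fin n → ℝ))
    (Zc : Set ((Fin n → ℝ) × (Fin m → ℝ))) (Zf : Set (Fin n → ℝ))
    (x0 : Fin n → ℝ) (Φx : Matrix (SIdx n T) (SIdx n T) ℝ)
    (Φu : Matrix (UIdx m T) (SIdx n T) ℝ) : Prop :=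
  ∀ w : Fin T × Fin n → ℝ, (∀ t : Fin T, (fun p => w (t, p)) ∈ W) →
    (∀ t : Fin T,
      ((fun p => (Φx *ᵥ assemble n T x0 w) (t.castSucc, p)),
        (fun q => (Φu *ᵥ assemble n T x0 w) (t, q))) ∈ Zc) ∧
    (fun p => (Φx *ᵥ assemble n T x0 w) (Fin.last T, p)) ∈ Zf

/-- `Φ_w`: the last `Tn` columns of `col(Φx, Φu)`. -/
def stackW (n m T : ℕ) (Φx : Matrix (SIdx n T) (SIdx n T) ℝ)
    (Φu : Matrix (UIdx m T) (SIdx n T) ℝ) :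
    Matrix (SIdx n T ⊕ UIdx m T) (Fin T × Fin n) ℝ :=
  Matrix.of fun r c =>
    Sum.elim (fun p => Φx p (c.1.succ, c.2)) (fun q => Φu q (c.1.succ, c.2)) r

/-- The linear matrix inequality `γ²I + 𝐂_T^{[1:T,1:T]} − Φ_wᵀ𝐒̄Φ_w ⪰ 0`. -/
def lmiOK (n m T : ℕ) (A : Matrix (Fin n) (Fin n) ℝ) (B : Matrix (Fin n) (Fin m) ℝ)
    (Q : Matrix (Fin n) (Fin n) ℝ) (R : Matrix (Fin m) (Fin m) ℝ)
    (P : Matrix (Fin n) (Fin n) ℝ) (γ : ℝ)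
    (Φx : Matrix (SIdx n T) (SIdx n T) ℝ) (Φu : Matrix (UIdx m T) (SIdx n T) ℝ) : Prop :=
  (γ ^ 2 • (1 : Matrix (Fin T × Fin n) (Fin T × Fin n) ℝ) +
    (Cmat n m T A B Q R).submatrix
      (fun c : Fin T × Fin n => ((c.1.succ : Fin (T + 1)), c.2))
      (fun c : Fin T × Fin n => ((c.1.succ : Fin (T + 1)), c.2)) -
    (stackW n m T Φx Φu)ᵀ * bigS n m T Q P R * stackW n m T Φx Φu).PosSemidef

/-- Membership in `Π_T^γ(x₀)`: causal, achievable, safe, and satisfying the LMI. -/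
def memPi (n m T : ℕ) (A : Matrix (Fin n) (Fin n) ℝ) (B : Matrix (Fin n) (Fin m) ℝ)
    (Q : Matrix (Fin n) (Fin n) ℝ) (R : Matrix (Fin m) (Fin m) ℝ)
    (P : Matrix (Fin n) (Fin n) ℝ) (W : Set (Fin n → ℝ))
    (Zc : Set ((Fin n → ℝ) × (Fin m → ℝ))) (Zf : Set (Fin n → ℝ))
    (γ : ℝ) (x0 : Fin n → ℝ)
    (Φx : Matrix (SIdx n T) (SIdx n T) ℝ) (Φu : Matrix (UIdx m T) (SIdx n T) ℝ) : Prop :=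
  causalPair n m T Φx Φu ∧ achievablePair n m T A B Φx Φu ∧
    safePair n m T W Zc Zf x0 Φx Φu ∧ lmiOK n m T A B Q R P γ Φx Φu

/-- The feasible set `X_T^γ = {x : Π_T^γ(x) ≠ ∅}`. -/
def Xset (n m T : ℕ) (A : Matrix (Fin n) (Fin n) ℝ) (B : Matrix (Fin n) (Fin m) ℝ)
    (Q : Matrix (Fin n) (Fin n) ℝ) (R : Matrix (Fin m) (Fin m) ℝ)
    (P : Matrix (Fin n) (Fin n) ℝ) (W : Set (Fin n → ℝ))
    (Zc : Set ((Fin n → ℝ) × (Fin m → ℝ))) (Zf : Set (Fin n → ℝ))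
    (γ : ℝ) : Set (Fin n → ℝ) :=
  {x | ∃ Φx Φu, memPi n m T A B Q R P W Zc Zf γ x Φx Φu}

theorem aux_Z_succ (n T : ℕ) (y : SIdx n T → ℝ) (t : Fin T) (i : Fin n) :
    (Zshift n T *ᵥ y) (t.succ, i) = y (t.castSucc, i) := by
  simp only [Matrix.mulVec, dotProduct, Zshift, Matrix.of_apply, Fin.val_succ]
  rw [Finset.sum_eq_single (t.castSucc, i)]
  · simp
  · rintro ⟨s, j⟩ - h
    rw [if_neg, zero_mul]
    rintro ⟨h1, h2⟩
    apply h
    ext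
    · simp at h1 ⊢; omega
    · simp at h2 ⊢; rw [h2]
  · simp

theorem aux_Z_zero (n T : ℕ) (y : SIdx n T → ℝ) (i : Fin n) :
    (Zshift n T *ᵥ y) (0, i) = 0 := by
  simp [Matrix.mulVec, dotProduct, Zshift]

theorem aux_bigA (n T : ℕ) (A : Matrix (Fin n) (Fin n) ℝ) (x : SIdx n T → ℝ)
    (t : Fin (T+1)) (i : Fin n) :
    (bigA n T A *ᵥ x) (t, i) = (A *ᵥ fun j => x (t, j)) i := by
  simp only [Matrix.mulVec, dotProduct, bigA, Matrix.of_apply]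
  rw [Fintype.sum_prod_type, Finset.sum_eq_single t]
  · simp
  · intro s _ h
    simp [Ne.symm h]
  · simp

theorem aux_bigB (n m T : ℕ) (B : Matrix (Fin n) (Fin m) ℝ) (u : UIdx m T → ℝ)
    (t : Fin T) (i : Fin n) :
    (bigB n m T B *ᵥ u) (t.castSucc, i) = (B *ᵥ fun j => u (t, j)) i := by
  simp only [Matrix.mulVec, dotProduct, bigB, Matrix.of_apply]
  rw [Fintype.sum_prod_type, Finset.sum_eq_single t]
  · simp
  · intro s _ h
    have : (t : ℕ) ≠ s := fun h' => h (Fin.ext h'.symm)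
    simp [this]
  · simp

/-- Trajectory dynamics in recursive form. -/
def auxDyn (n m T : ℕ) (A : Matrix (Fin n) (Fin n) ℝ) (B : Matrix (Fin n) (Fin m) ℝ)
    (x : SIdx n T → ℝ) (u : UIdx m T → ℝ) (δ : SIdx n T → ℝ) : Prop :=
  (∀ i, x (0, i) = δ (0, i)) ∧ ∀ (t : Fin T) i, x (t.succ, i) =
    (A *ᵥ fun j => x (t.castSucc, j)) i + (B *ᵥ fun j => u (t, j)) i + δ (t.succ, i)

theorem aux_dyn_iff (n m T : ℕ) (A : Matrix (Fin n) (Fin n) ℝ) (B : Matrix (Fin n) (Fin m) ℝ)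
    (x : SIdx n T → ℝ) (u : UIdx m T → ℝ) (δ : SIdx n T → ℝ) :
    (1 - Zshift n T * bigA n T A) *ᵥ x - (Zshift n T * bigB n m T B) *ᵥ u = δ ↔
      auxDyn n m T A B x u δ := by
  rw [Matrix.sub_mulVec, Matrix.one_mulVec, ← mulVec_mulVec, ← mulVec_mulVec]
  constructor
  · rintro rfl
    constructor
    · intro i
      simp [-mulVec_mulVec, aux_Z_zero]
    · intro t i
      simp [-mulVec_mulVec, aux_Z_succ, aux_bigA, aux_bigB]
  · rintro ⟨h0, h1⟩
    ext ⟨t, i⟩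
    refine Fin.cases ?_ (fun t => ?_) t
    · simp [-mulVec_mulVec, aux_Z_zero, h0]
    · simp [-mulVec_mulVec, aux_Z_succ, aux_bigA, aux_bigB, h1]
      ring

theorem aux_unit (n T : ℕ) (A : Matrix (Fin n) (Fin n) ℝ) :
    IsUnit (1 - Zshift n T * bigA n T A) := by
  rw [← Matrix.mulVec_injective_iff_isUnit]
  have key : ∀ x : SIdx n T → ℝ, (1 - Zshift n T * bigA n T A) *ᵥ x = 0 → x = 0 := by
    intro x hx
    have h : auxDyn n 0 T A 0 x 0 0 := by
      rw [← aux_dyn_iff, hx]; simp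
    obtain ⟨h0, h1⟩ := h
    ext ⟨t, i⟩
    induction t using Fin.induction generalizing i with
    | zero => simpa using h0 i
    | succ t ih =>
      have h2 : (fun j => x (t.castSucc, j)) = 0 := by ext j; simpa using ih j
      rw [h1, h2]; simp
  intro x y hxy
  have := key (x - y) (by rw [Matrix.mulVec_sub]; exact sub_eq_zero.2 hxy)
  exact sub_eq_zero.1 this

theorem aux_FG (n m T : ℕ) (A : Matrix (Fin n) (Fin n) ℝ) (B : Matrix (Fin n) (Fin m) ℝ)
    (x : SIdx n T → ℝ) (u : UIdx m T → ℝ) (δ : SIdx n T → ℝ) :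
    x = bigF n m T A B *ᵥ u + bigG n T A *ᵥ δ ↔ auxDyn n m T A B x u δ := by
  rw [← aux_dyn_iff]
  have hu := aux_unit n T A
  have hd : IsUnit (1 - Zshift n T * bigA n T A).det := (Matrix.isUnit_iff_isUnit_det _).1 hu
  rw [bigF, bigG, ← mulVec_mulVec, ← Matrix.mulVec_add, sub_eq_iff_eq_add']
  constructor
  · rintro rfl
    rw [mulVec_mulVec, Matrix.mul_nonsing_inv _ hd, one_mulVec]
  · intro h
    rw [← h, mulVec_mulVec, Matrix.nonsing_inv_mul _ hd, one_mulVec]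

theorem aux_qform_Q (n T : ℕ) (Q : Matrix (Fin n) (Fin n) ℝ) (x : SIdx n T → ℝ) :
    x ⬝ᵥ (bigQ n T Q *ᵥ x) = ∑ t : Fin T, (fun i => x (t.castSucc, i)) ⬝ᵥ
      (Q *ᵥ fun i => x (t.castSucc, i)) := by
  have h : ∀ t i, (bigQ n T Q *ᵥ x) (t, i) =
      if (t : ℕ) < T then (Q *ᵥ fun j => x (t, j)) i else 0 := by
    intro t i
    simp only [Matrix.mulVec, dotProduct, bigQ, Matrix.of_apply]
    rw [Fintype.sum_prod_type, Finset.sum_eq_single t]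
    · split_ifs <;> simp [*]
    · intro s _ h
      simp [Ne.symm h]
    · simp
  rw [dotProduct, Fintype.sum_prod_type, Fin.sum_univ_castSucc]
  simp [h, dotProduct]

theorem aux_qform_Qbar (n T : ℕ) (Q P : Matrix (Fin n) (Fin n) ℝ) (x : SIdx n T → ℝ) :
    x ⬝ᵥ (bigQbar n T Q P *ᵥ x) = ∑ t : Fin T, (fun i => x (t.castSucc, i)) ⬝ᵥ
      (Q *ᵥ fun i => x (t.castSucc, i)) + (fun i => x (Fin.last T, i)) ⬝ᵥ
      (P *ᵥ fun i => x (Fin.last T, i)) := by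
  have h : ∀ t i, (bigQbar n T Q P *ᵥ x) (t, i) =
      if (t : ℕ) < T then (Q *ᵥ fun j => x (t, j)) i else (P *ᵥ fun j => x (t, j)) i := by
    intro t i
    simp only [Matrix.mulVec, dotProduct, bigQbar, Matrix.of_apply]
    rw [Fintype.sum_prod_type, Finset.sum_eq_single t]
    · split_ifs <;> simp [*]
    · intro s _ h
      simp [Ne.symm h]
    · simp
  rw [dotProduct, Fintype.sum_prod_type, Fin.sum_univ_castSucc]
  simp [h, dotProduct]

theorem aux_qform_R (m T : ℕ) (R : Matrix (Fin m) (Fin m) ℝ) (u : UIdx m T → ℝ) :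
    u ⬝ᵥ (bigR m T R *ᵥ u) = ∑ t : Fin T, (fun i => u (t, i)) ⬝ᵥ (R *ᵥ fun i => u (t, i)) := by
  have h : ∀ t i, (bigR m T R *ᵥ u) (t, i) = (R *ᵥ fun j => u (t, j)) i := by
    intro t i
    simp only [Matrix.mulVec, dotProduct, bigR, Matrix.of_apply]
    rw [Fintype.sum_prod_type, Finset.sum_eq_single t]
    · simp [*]
    · intro s _ h
      simp [Ne.symm h]
    · simp
  rw [dotProduct, Fintype.sum_prod_type]
  simp [h, dotProduct]

theorem aux_symm_bigQ (n T : ℕ) (Q : Matrix (Fin n) (Fin n) ℝ) (h : Qᵀ = Q) :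
    (bigQ n T Q)ᵀ = bigQ n T Q := by
  ext ⟨t, i⟩ ⟨s, j⟩
  have := congrFun (congrFun h i) j
  simp only [transpose_apply] at this
  by_cases hts : t = s
  · subst hts; simp [bigQ, this]
  · simp [bigQ, hts, Ne.symm hts]

theorem aux_symm_bigQbar (n T : ℕ) (Q P : Matrix (Fin n) (Fin n) ℝ) (h : Qᵀ = Q) (hP : Pᵀ = P) :
    (bigQbar n T Q P)ᵀ = bigQbar n T Q P := by
  ext ⟨t, i⟩ ⟨s, j⟩
  have := congrFun (congrFun h i) j
  have h2 := congrFun (congrFun hP i) j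
  simp only [transpose_apply] at this h2
  by_cases hts : t = s
  · subst hts; simp [bigQbar, this, h2]
  · simp [bigQbar, hts, Ne.symm hts]

theorem aux_symm_bigR (n T : ℕ) (Q : Matrix (Fin n) (Fin n) ℝ) (h : Qᵀ = Q) :
    (bigR n T Q)ᵀ = bigR n T Q := by
  ext ⟨t, i⟩ ⟨s, j⟩
  have := congrFun (congrFun h i) j
  simp only [transpose_apply] at this
  by_cases hts : t = s
  · subst hts; simp [bigR, this]
  · simp [bigR, hts, Ne.symm hts]


theorem aux_psd_bigQ (n T : ℕ) (Q : Matrix (Fin n) (Fin n) ℝ) (hQ : Q.PosSemidef) :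
    (bigQ n T Q).PosSemidef := by
  have hs : Qᵀ = Q := by simpa [Matrix.IsHermitian] using hQ.isHermitian
  refine Matrix.PosSemidef.of_dotProduct_mulVec_nonneg ?_ fun x => ?_
  · simpa [Matrix.IsHermitian] using aux_symm_bigQ n T Q hs
  · rw [star_trivial, aux_qform_Q]
    exact Finset.sum_nonneg fun t _ => by simpa using hQ.dotProduct_mulVec_nonneg _

theorem aux_pd_bigR (m T : ℕ) (R : Matrix (Fin m) (Fin m) ℝ) (hR : R.PosDef) :
    (bigR m T R).PosDef := by
  have hs : Rᵀ = R := by simpa [Matrix.IsHermitian] using hR.isHermitian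
  refine Matrix.PosDef.of_dotProduct_mulVec_pos ?_ fun x hx => ?_
  · simpa [Matrix.IsHermitian] using aux_symm_bigR m T R hs
  · rw [star_trivial, aux_qform_R]
    obtain ⟨⟨t, i⟩, hti⟩ := Function.ne_iff.1 hx
    refine Finset.sum_pos' (fun t _ => ?_) ⟨t, Finset.mem_univ _, ?_⟩
    · simpa using hR.posSemidef.dotProduct_mulVec_nonneg (fun i => x (t, i))
    · have : (fun i => x (t, i)) ≠ 0 := fun h => hti (congrFun h i)
      simpa using hR.dotProduct_mulVec_pos this

theorem aux_sym_dot {α : Type*} [Fintype α] (M : Matrix α α ℝ) (h : Mᵀ = M) (x y : α → ℝ) :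
    x ⬝ᵥ (M *ᵥ y) = y ⬝ᵥ (M *ᵥ x) := by
  rw [Matrix.dotProduct_mulVec, ← Matrix.mulVec_transpose, h, dotProduct_comm]

theorem aux_clair_unit {α β : Type*} [Fintype α] [DecidableEq α] [Fintype β] [DecidableEq β]
    (F : Matrix α β ℝ) (Q : Matrix α α ℝ) (R : Matrix β β ℝ) (hQ : Q.PosSemidef) (hR : R.PosDef) :
    IsUnit (1 + F * R⁻¹ * Fᵀ * Q) := by
  rw [Matrix.isUnit_iff_isUnit_det]
  have hRu : IsUnit R.det := (Matrix.isUnit_iff_isUnit_det _).1 hR.isUnit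
  have h1 : (R + Fᵀ * Q * F).PosDef := by
    refine hR.add_posSemidef ?_
    simpa using hQ.conjTranspose_mul_mul_same F
  have h2 : (R⁻¹ * (R + Fᵀ * Q * F)) = 1 + (R⁻¹ * Fᵀ * Q) * F := by
    rw [Matrix.mul_add, Matrix.nonsing_inv_mul _ hRu]; simp only [Matrix.mul_assoc]
  have h3 : (1 + F * R⁻¹ * Fᵀ * Q).det = (1 + (R⁻¹ * Fᵀ * Q) * F).det := by
    rw [Matrix.det_one_add_mul_comm (R⁻¹ * Fᵀ * Q) F]; simp only [Matrix.mul_assoc]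
  rw [h3, ← h2, Matrix.det_mul]
  exact (Matrix.isUnit_nonsing_inv_det _ hRu).mul ((Matrix.isUnit_iff_isUnit_det _).1 h1.isUnit)

theorem aux_clair {α β : Type*} [Fintype α] [DecidableEq α] [Fintype β] [DecidableEq β]
    (F : Matrix α β ℝ) (Q : Matrix α α ℝ) (R : Matrix β β ℝ) (hQ : Q.PosSemidef) (hR : R.PosDef)
    (g : α → ℝ) :
    ∃ v : β → ℝ,
      (F *ᵥ v + g) ⬝ᵥ (Q *ᵥ (F *ᵥ v + g)) + v ⬝ᵥ (R *ᵥ v) =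
        g ⬝ᵥ (Q *ᵥ ((1 + F * R⁻¹ * Fᵀ * Q)⁻¹ *ᵥ g)) ∧
      ∀ u : β → ℝ, g ⬝ᵥ (Q *ᵥ ((1 + F * R⁻¹ * Fᵀ * Q)⁻¹ *ᵥ g)) ≤
        (F *ᵥ u + g) ⬝ᵥ (Q *ᵥ (F *ᵥ u + g)) + u ⬝ᵥ (R *ᵥ u) := by
  have hM := (Matrix.isUnit_iff_isUnit_det _).1 (aux_clair_unit F Q R hQ hR)
  have hRu : IsUnit R.det := (Matrix.isUnit_iff_isUnit_det _).1 hR.isUnit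
  have hQs : Qᵀ = Q := by simpa [Matrix.IsHermitian] using hQ.isHermitian
  have hRs : Rᵀ = R := by simpa [Matrix.IsHermitian] using hR.isHermitian
  set y := (1 + F * R⁻¹ * Fᵀ * Q)⁻¹ *ᵥ g with hy
  have hyg : y + F *ᵥ (R⁻¹ *ᵥ (Fᵀ *ᵥ (Q *ᵥ y))) = g := by
    have : (1 + F * R⁻¹ * Fᵀ * Q) *ᵥ y = g := by
      rw [hy, mulVec_mulVec, Matrix.mul_nonsing_inv _ hM, one_mulVec]
    rw [← this, Matrix.add_mulVec, one_mulVec]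
    simp only [← mulVec_mulVec]
  set v := -(R⁻¹ *ᵥ (Fᵀ *ᵥ (Q *ᵥ y))) with hv
  have hx : F *ᵥ v + g = y := by
    rw [← hyg, hv, Matrix.mulVec_neg]; abel
  have hRv : R *ᵥ v = -(Fᵀ *ᵥ (Q *ᵥ y)) := by
    rw [hv, Matrix.mulVec_neg, mulVec_mulVec, Matrix.mul_nonsing_inv _ hRu, one_mulVec]
  have hcross : ∀ d : β → ℝ, d ⬝ᵥ (R *ᵥ v) = - ((F *ᵥ d) ⬝ᵥ (Q *ᵥ y)) := by
    intro d
    rw [hRv, dotProduct_neg, Matrix.dotProduct_mulVec, Matrix.vecMul_transpose]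
  have heq : (F *ᵥ v + g) ⬝ᵥ (Q *ᵥ (F *ᵥ v + g)) + v ⬝ᵥ (R *ᵥ v) = g ⬝ᵥ (Q *ᵥ y) := by
    rw [hx, hcross, ← hx, add_dotProduct, hx]; ring
  refine ⟨v, heq, fun u => ?_⟩
  rw [← heq, hx]
  have h1 : F *ᵥ u + g = y + F *ᵥ (u - v) := by
    rw [← hx, Matrix.mulVec_sub]; abel
  have h2 : u = v + (u - v) := by abel
  rw [h1]
  generalize u - v = d at *
  have e1 : u ⬝ᵥ (R *ᵥ u) = v ⬝ᵥ (R *ᵥ v) + 2 * (d ⬝ᵥ (R *ᵥ v)) + d ⬝ᵥ (R *ᵥ d) := by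
    rw [h2, Matrix.mulVec_add, add_dotProduct, dotProduct_add, dotProduct_add,
      aux_sym_dot R hRs v d]; ring
  have e2 : (y + F *ᵥ d) ⬝ᵥ (Q *ᵥ (y + F *ᵥ d)) = y ⬝ᵥ (Q *ᵥ y) + 2 * ((F *ᵥ d) ⬝ᵥ (Q *ᵥ y))
      + (F *ᵥ d) ⬝ᵥ (Q *ᵥ (F *ᵥ d)) := by
    rw [Matrix.mulVec_add, add_dotProduct, dotProduct_add, dotProduct_add,
      aux_sym_dot Q hQs y (F *ᵥ d)]; ring
  have e3 := hcross d
  rw [e1, e2]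
  have p1 := hQ.dotProduct_mulVec_nonneg (F *ᵥ d)
  have p2 := hR.posSemidef.dotProduct_mulVec_nonneg d
  simp only [star_trivial] at p1 p2
  linarith

theorem aux_C_symm (n m T : ℕ) (A : Matrix (Fin n) (Fin n) ℝ) (B : Matrix (Fin n) (Fin m) ℝ)
    (Q : Matrix (Fin n) (Fin n) ℝ) (R : Matrix (Fin m) (Fin m) ℝ)
    (hQ : Q.PosSemidef) (hR : R.PosDef) : (Cmat n m T A B Q R)ᵀ = Cmat n m T A B Q R := by
  have hQ' := aux_psd_bigQ n T Q hQ
  have hR' := aux_pd_bigR m T R hR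
  have hu := aux_clair_unit (bigF n m T A B) _ _ hQ' hR'
  unfold Cmat
  generalize bigF n m T A B = F at *
  generalize bigQ n T Q = Q' at *
  generalize bigR m T R = R' at *
  generalize bigG n T A = G at *
  have hQs : Q'ᵀ = Q' := by simpa [Matrix.IsHermitian] using hQ'.isHermitian
  have hRs : R'ᵀ = R' := by simpa [Matrix.IsHermitian] using hR'.isHermitian
  set M := 1 + F * R'⁻¹ * Fᵀ * Q' with hM
  have hMd := (Matrix.isUnit_iff_isUnit_det _).1 hu
  have hMtd : IsUnit Mᵀ.det := by rwa [Matrix.det_transpose]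
  have h1 : Mᵀ * Q' = Q' * M := by
    rw [hM]
    simp [Matrix.transpose_mul, Matrix.transpose_nonsing_inv, hQs, hRs, Matrix.mul_add,
      Matrix.add_mul, Matrix.mul_assoc]
  have h2 : Mᵀ⁻¹ * Q' = Q' * M⁻¹ := by
    calc Mᵀ⁻¹ * Q' = Mᵀ⁻¹ * (Q' * M) * M⁻¹ := by
          rw [Matrix.mul_assoc, Matrix.mul_assoc, Matrix.mul_nonsing_inv _ hMd, Matrix.mul_one]
      _ = Q' * M⁻¹ := by
          rw [← h1, ← Matrix.mul_assoc, Matrix.nonsing_inv_mul _ hMtd, Matrix.one_mul]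
  rw [Matrix.transpose_mul, Matrix.transpose_mul, Matrix.transpose_mul, Matrix.transpose_nonsing_inv,
    hQs, Matrix.transpose_transpose, ← Matrix.mul_assoc Mᵀ⁻¹, h2]
  simp only [Matrix.mul_assoc]

/-- Cost along a trajectory (no terminal cost). -/
def auxCost (n m T : ℕ) (Q : Matrix (Fin n) (Fin n) ℝ) (R : Matrix (Fin m) (Fin m) ℝ)
    (x : SIdx n T → ℝ) (u : UIdx m T → ℝ) : ℝ :=
  ∑ t : Fin T, ((fun i => x (t.castSucc, i)) ⬝ᵥ (Q *ᵥ fun i => x (t.castSucc, i)) +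
    (fun i => u (t, i)) ⬝ᵥ (R *ᵥ fun i => u (t, i)))

theorem aux_C_min (n m T : ℕ) (A : Matrix (Fin n) (Fin n) ℝ) (B : Matrix (Fin n) (Fin m) ℝ)
    (Q : Matrix (Fin n) (Fin n) ℝ) (R : Matrix (Fin m) (Fin m) ℝ)
    (hQ : Q.PosSemidef) (hR : R.PosDef) (δ : SIdx n T → ℝ) :
    (∃ x u, auxDyn n m T A B x u δ ∧ auxCost n m T Q R x u = δ ⬝ᵥ (Cmat n m T A B Q R *ᵥ δ)) ∧
    ∀ x u, auxDyn n m T A B x u δ → δ ⬝ᵥ (Cmat n m T A B Q R *ᵥ δ) ≤ auxCost n m T Q R x u := by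
  obtain ⟨v, h1, h2⟩ := aux_clair (bigF n m T A B) _ _ (aux_psd_bigQ n T Q hQ)
    (aux_pd_bigR m T R hR) (bigG n T A *ᵥ δ)
  have hC : δ ⬝ᵥ (Cmat n m T A B Q R *ᵥ δ) = (bigG n T A *ᵥ δ) ⬝ᵥ (bigQ n T Q *ᵥ
      ((1 + bigF n m T A B * (bigR m T R)⁻¹ * (bigF n m T A B)ᵀ * bigQ n T Q)⁻¹ *ᵥ
        (bigG n T A *ᵥ δ))) := by
    unfold Cmat
    simp only [← mulVec_mulVec]
    rw [Matrix.dotProduct_mulVec, Matrix.vecMul_transpose]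
  have hcost : ∀ x u, auxCost n m T Q R x u =
      x ⬝ᵥ (bigQ n T Q *ᵥ x) + u ⬝ᵥ (bigR m T R *ᵥ u) := by
    intro x u
    rw [aux_qform_Q, aux_qform_R, auxCost, Finset.sum_add_distrib]
  constructor
  · refine ⟨_, v, (aux_FG n m T A B _ v δ).1 rfl, ?_⟩
    rw [hcost, h1, hC]
  · intro x u hd
    rw [hcost, hC, (aux_FG n m T A B _ u δ).2 hd]
    exact h2 u

theorem aux_C_mono (n m T : ℕ) (A : Matrix (Fin n) (Fin n) ℝ) (B : Matrix (Fin n) (Fin m) ℝ)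
    (Q : Matrix (Fin n) (Fin n) ℝ) (R : Matrix (Fin m) (Fin m) ℝ)
    (hQ : Q.PosSemidef) (hR : R.PosDef) (δ : SIdx n (T + 1) → ℝ) :
    (fun p : SIdx n T => δ (p.1.castSucc, p.2)) ⬝ᵥ
      (Cmat n m T A B Q R *ᵥ (fun p : SIdx n T => δ (p.1.castSucc, p.2))) ≤
    δ ⬝ᵥ (Cmat n m (T + 1) A B Q R *ᵥ δ) := by
  obtain ⟨⟨x, u, ⟨hd0, hd1⟩, hc⟩, -⟩ := aux_C_min n m (T + 1) A B Q R hQ hR δ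
  rw [← hc]
  refine ((aux_C_min n m T A B Q R hQ hR _).2 (fun p => x (p.1.castSucc, p.2))
    (fun p => u (p.1.castSucc, p.2)) ⟨fun i => ?_, fun t i => ?_⟩).trans ?_
  · simpa using hd0 i
  · simpa using hd1 t.castSucc i
  · unfold auxCost
    rw [Fin.sum_univ_castSucc (n := T)]
    have p1 := hQ.dotProduct_mulVec_nonneg (fun i => x ((Fin.last T).castSucc, i))
    have p2 := hR.posSemidef.dotProduct_mulVec_nonneg (fun i => u (Fin.last T, i))
    simp only [star_trivial] at p1 p2
    linarith

theorem aux_hinf (n m : ℕ)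
    (A : Matrix (Fin n) (Fin n) ℝ) (B : Matrix (Fin n) (Fin m) ℝ)
    (Q : Matrix (Fin n) (Fin n) ℝ) (R : Matrix (Fin m) (Fin m) ℝ) (hR : R.PosDef)
    (γf : ℝ) (P : Matrix (Fin n) (Fin n) ℝ) (hP : P.PosDef)
    (hγP : (γf ^ 2 • (1 : Matrix (Fin n) (Fin n) ℝ) - P).PosDef)
    (Pbar : Matrix (Fin n) (Fin n) ℝ)
    (hPbar : Pbar = P + P * (γf ^ 2 • (1 : Matrix (Fin n) (Fin n) ℝ) - P)⁻¹ * P)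
    (hRic : P = Q + Aᵀ * Pbar * A -
      Aᵀ * Pbar * B * (R + Bᵀ * Pbar * B)⁻¹ * Bᵀ * Pbar * A)
    (Kf : Matrix (Fin m) (Fin n) ℝ)
    (hKf : Kf = -((R + Bᵀ * Pbar * B)⁻¹ * Bᵀ * Pbar * A)) (x w : Fin n → ℝ) :
    x ⬝ᵥ (Q *ᵥ x) + (Kf *ᵥ x) ⬝ᵥ (R *ᵥ (Kf *ᵥ x)) +
      ((A + B * Kf) *ᵥ x + w) ⬝ᵥ (P *ᵥ ((A + B * Kf) *ᵥ x + w)) ≤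
      x ⬝ᵥ (P *ᵥ x) + γf ^ 2 * (w ⬝ᵥ w) := by
  have hPs : Pᵀ = P := by simpa [Matrix.IsHermitian] using hP.isHermitian
  set M := γf ^ 2 • (1 : Matrix (Fin n) (Fin n) ℝ) - P with hM
  have hMs : Mᵀ = M := by simpa [Matrix.IsHermitian] using hγP.isHermitian
  have hMd : IsUnit M.det := (Matrix.isUnit_iff_isUnit_det _).1 hγP.isUnit
  have hPb : Pbar.PosSemidef := by
    rw [hPbar]
    refine hP.posSemidef.add ?_
    have := hγP.posSemidef.inv.conjTranspose_mul_mul_same P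
    simpa [hPs] using this
  have hPbs : Pbarᵀ = Pbar := by simpa [Matrix.IsHermitian] using hPb.isHermitian
  have hS : (R + Bᵀ * Pbar * B).PosDef := by
    refine hR.add_posSemidef ?_
    simpa using hPb.conjTranspose_mul_mul_same B
  have hSd := (Matrix.isUnit_iff_isUnit_det _).1 hS.isUnit
  have hSK : (R + Bᵀ * Pbar * B) * Kf = -(Bᵀ * Pbar * A) := by
    rw [hKf]
    generalize R + Bᵀ * Pbar * B = S at *
    rw [Matrix.mul_neg, Matrix.mul_assoc, Matrix.mul_assoc, ← Matrix.mul_assoc S,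
      Matrix.mul_nonsing_inv _ hSd, Matrix.one_mul, Matrix.mul_assoc]
  have hmat : Q + Kfᵀ * R * Kf + (A + B * Kf)ᵀ * Pbar * (A + B * Kf) = P := by
    have e1 : Q + Kfᵀ * R * Kf + (A + B * Kf)ᵀ * Pbar * (A + B * Kf) =
        Q + Aᵀ * Pbar * A + Aᵀ * Pbar * B * Kf + Kfᵀ * (Bᵀ * Pbar * A)
          + Kfᵀ * ((R + Bᵀ * Pbar * B) * Kf) := by
      simp only [Matrix.transpose_add, Matrix.transpose_mul, Matrix.add_mul, Matrix.mul_add,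
        Matrix.mul_assoc]
      abel
    have e2 : P = Q + Aᵀ * Pbar * A + Aᵀ * Pbar * B * Kf := by
      conv_lhs => rw [hRic]
      rw [hKf, Matrix.mul_neg, ← sub_eq_add_neg]
      simp only [Matrix.mul_assoc]
    rw [e1, hSK, Matrix.mul_neg, add_neg_cancel_right, ← e2]
  have hq : x ⬝ᵥ (Q *ᵥ x) + (Kf *ᵥ x) ⬝ᵥ (R *ᵥ (Kf *ᵥ x)) +
      ((A + B * Kf) *ᵥ x) ⬝ᵥ (Pbar *ᵥ ((A + B * Kf) *ᵥ x)) = x ⬝ᵥ (P *ᵥ x) := by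
    conv_rhs => rw [← hmat, Matrix.add_mulVec, Matrix.add_mulVec]
    rw [dotProduct_add, dotProduct_add]
    generalize A + B * Kf = D
    simp only [← mulVec_mulVec]
    rw [Matrix.dotProduct_mulVec x Kfᵀ, Matrix.dotProduct_mulVec x Dᵀ, Matrix.vecMul_transpose,
      Matrix.vecMul_transpose]
  generalize (A + B * Kf) *ᵥ x = y at *
  have hz := hγP.posSemidef.dotProduct_mulVec_nonneg (w - M⁻¹ *ᵥ (P *ᵥ y))
  rw [star_trivial] at hz
  have hMM : M *ᵥ (M⁻¹ *ᵥ (P *ᵥ y)) = P *ᵥ y := by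
    rw [mulVec_mulVec, Matrix.mul_nonsing_inv _ hMd, one_mulVec]
  have hPy : y ⬝ᵥ (Pbar *ᵥ y) = y ⬝ᵥ (P *ᵥ y) + (M⁻¹ *ᵥ (P *ᵥ y)) ⬝ᵥ (P *ᵥ y) := by
    rw [hPbar, Matrix.add_mulVec, dotProduct_add]
    simp only [← mulVec_mulVec]
    rw [aux_sym_dot P hPs y (M⁻¹ *ᵥ (P *ᵥ y))]
  have hMw : w ⬝ᵥ (M *ᵥ w) = γf ^ 2 * (w ⬝ᵥ w) - w ⬝ᵥ (P *ᵥ w) := by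
    rw [hM, Matrix.sub_mulVec, Matrix.smul_mulVec, one_mulVec, dotProduct_sub, dotProduct_smul,
      smul_eq_mul]
  rw [Matrix.mulVec_sub, hMM, sub_dotProduct, dotProduct_sub, dotProduct_sub,
    aux_sym_dot M hMs (M⁻¹ *ᵥ (P *ᵥ y)) w, hMM, hMw] at hz
  rw [Matrix.mulVec_add, add_dotProduct, dotProduct_add, dotProduct_add, aux_sym_dot P hPs y w]
  linarith

theorem aux_ach_iff (n m T : ℕ) (A : Matrix (Fin n) (Fin n) ℝ) (B : Matrix (Fin n) (Fin m) ℝ)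
    (Φx : Matrix (SIdx n T) (SIdx n T) ℝ) (Φu : Matrix (UIdx m T) (SIdx n T) ℝ) :
    achievablePair n m T A B Φx Φu ↔ ∀ δ, auxDyn n m T A B (Φx *ᵥ δ) (Φu *ᵥ δ) δ := by
  unfold achievablePair
  rw [Matrix.ext_iff_mulVec]
  refine forall_congr' fun δ => ?_
  rw [← aux_dyn_iff, one_mulVec, Matrix.sub_mulVec, ← mulVec_mulVec, ← mulVec_mulVec (M := Zshift n T * bigB n m T B)]

theorem aux_assemble_sum (n T : ℕ) (w : Fin T × Fin n → ℝ) (f : SIdx n T → ℝ) :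
    ∑ p, f p * assemble n T 0 w p = ∑ c : Fin T × Fin n, f (c.1.succ, c.2) * w c := by
  rw [Fintype.sum_prod_type, Fin.sum_univ_succ, Fintype.sum_prod_type]
  simp [assemble]

theorem aux_lmi_iff (n m T : ℕ) (A : Matrix (Fin n) (Fin n) ℝ) (B : Matrix (Fin n) (Fin m) ℝ)
    (Q : Matrix (Fin n) (Fin n) ℝ) (R : Matrix (Fin m) (Fin m) ℝ)
    (hQ : Q.PosSemidef) (hR : R.PosDef)
    (P : Matrix (Fin n) (Fin n) ℝ) (hP : P.PosDef) (γ : ℝ)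
    (Φx : Matrix (SIdx n T) (SIdx n T) ℝ) (Φu : Matrix (UIdx m T) (SIdx n T) ℝ) :
    lmiOK n m T A B Q R P γ Φx Φu ↔ ∀ w : Fin T × Fin n → ℝ,
      auxCost n m T Q R (Φx *ᵥ assemble n T 0 w) (Φu *ᵥ assemble n T 0 w) +
        (fun i => (Φx *ᵥ assemble n T 0 w) (Fin.last T, i)) ⬝ᵥ
          (P *ᵥ fun i => (Φx *ᵥ assemble n T 0 w) (Fin.last T, i)) ≤
      γ ^ 2 * (w ⬝ᵥ w) +
        assemble n T 0 w ⬝ᵥ (Cmat n m T A B Q R *ᵥ assemble n T 0 w) := by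
  have hQs : Qᵀ = Q := by simpa [Matrix.IsHermitian] using hQ.isHermitian
  have hRs : Rᵀ = R := by simpa [Matrix.IsHermitian] using hR.isHermitian
  have hPs : Pᵀ = P := by simpa [Matrix.IsHermitian] using hP.isHermitian
  have hS : (bigS n m T Q P R)ᵀ = bigS n m T Q P R := by
    unfold bigS
    rw [Matrix.fromBlocks_transpose, aux_symm_bigQbar n T Q P hQs hPs, aux_symm_bigR m T R hRs]
    simp
  have hC := aux_C_symm n m T A B Q R hQ hR
  have hst : ∀ w, stackW n m T Φx Φu *ᵥ w =
      Sum.elim (Φx *ᵥ assemble n T 0 w) (Φu *ᵥ assemble n T 0 w) := by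
    intro w
    ext r
    rcases r with p | q
    · simp only [Matrix.mulVec, dotProduct, stackW, Matrix.of_apply, Sum.elim_inl]
      rw [aux_assemble_sum]
    · simp only [Matrix.mulVec, dotProduct, stackW, Matrix.of_apply, Sum.elim_inr]
      rw [aux_assemble_sum]
  have hsub : ∀ w : Fin T × Fin n → ℝ, w ⬝ᵥ ((Cmat n m T A B Q R).submatrix
      (fun c : Fin T × Fin n => ((c.1.succ : Fin (T + 1)), c.2))
      (fun c : Fin T × Fin n => ((c.1.succ : Fin (T + 1)), c.2)) *ᵥ w) =
      assemble n T 0 w ⬝ᵥ (Cmat n m T A B Q R *ᵥ assemble n T 0 w) := by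
    intro w
    rw [dotProduct_comm (assemble n T 0 w), dotProduct_comm w]
    unfold dotProduct
    rw [aux_assemble_sum]
    refine Finset.sum_congr rfl fun c _ => ?_
    simp only [Matrix.mulVec, dotProduct, Matrix.submatrix_apply]
    rw [aux_assemble_sum]
  have hform : ∀ w : Fin T × Fin n → ℝ, w ⬝ᵥ ((γ ^ 2 • (1 : Matrix (Fin T × Fin n) (Fin T × Fin n) ℝ) +
    (Cmat n m T A B Q R).submatrix
      (fun c : Fin T × Fin n => ((c.1.succ : Fin (T + 1)), c.2))
      (fun c : Fin T × Fin n => ((c.1.succ : Fin (T + 1)), c.2)) -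
    (stackW n m T Φx Φu)ᵀ * bigS n m T Q P R * stackW n m T Φx Φu) *ᵥ w) =
      γ ^ 2 * (w ⬝ᵥ w) +
        assemble n T 0 w ⬝ᵥ (Cmat n m T A B Q R *ᵥ assemble n T 0 w) -
      (auxCost n m T Q R (Φx *ᵥ assemble n T 0 w) (Φu *ᵥ assemble n T 0 w) +
        (fun i => (Φx *ᵥ assemble n T 0 w) (Fin.last T, i)) ⬝ᵥ
          (P *ᵥ fun i => (Φx *ᵥ assemble n T 0 w) (Fin.last T, i))) := by
    intro w
    rw [Matrix.sub_mulVec, Matrix.add_mulVec, dotProduct_sub, dotProduct_add, hsub,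
      Matrix.smul_mulVec, one_mulVec, dotProduct_smul, smul_eq_mul]
    congr 1
    rw [← mulVec_mulVec, ← mulVec_mulVec, hst, Matrix.dotProduct_mulVec, Matrix.vecMul_transpose,
      hst, bigS, Matrix.fromBlocks_mulVec, sumElim_dotProduct_sumElim]
    simp only [Matrix.zero_mulVec, add_zero, zero_add, Sum.elim_comp_inl, Sum.elim_comp_inr]
    rw [aux_qform_Qbar, aux_qform_R, auxCost, Finset.sum_add_distrib]
    ring
  unfold lmiOK
  constructor
  · intro h w
    have := h.dotProduct_mulVec_nonneg w
    rw [star_trivial, hform] at this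
    linarith
  · intro h
    refine Matrix.PosSemidef.of_dotProduct_mulVec_nonneg ?_ fun w => ?_
    · unfold Matrix.IsHermitian
      rw [Matrix.conjTranspose_eq_transpose_of_trivial, Matrix.transpose_sub, Matrix.transpose_add,
        Matrix.transpose_smul, Matrix.transpose_one, Matrix.transpose_submatrix, hC,
        Matrix.transpose_mul, Matrix.transpose_mul, hS, Matrix.transpose_transpose, Matrix.mul_assoc]
    · rw [star_trivial, hform]
      linarith [h w]

/-- Truncation of a stacked trajectory. -/
def auxTrunc (n T : ℕ) : (SIdx n (T + 1) → ℝ) →ₗ[ℝ] (SIdx n T → ℝ) :=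
  LinearMap.funLeft ℝ ℝ (fun p => (p.1.castSucc, p.2))

theorem aux_trunc_apply (n T : ℕ) (δ : SIdx n (T + 1) → ℝ) (p : SIdx n T) :
    auxTrunc n T δ p = δ (p.1.castSucc, p.2) := rfl

theorem aux_trunc_assemble (n T : ℕ) (x0 : Fin n → ℝ) (w : Fin (T + 1) × Fin n → ℝ) :
    auxTrunc n T (assemble n (T + 1) x0 w) = assemble n T x0 (fun c => w (c.1.castSucc, c.2)) := by
  ext p
  simp [aux_trunc_apply, assemble]

theorem aux_assemble_last (n T : ℕ) (x0 : Fin n → ℝ) (w : Fin (T + 1) × Fin n → ℝ) (i : Fin n) :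
    assemble n (T + 1) x0 w (Fin.last (T + 1), i) = w (Fin.last T, i) := by
  simp [assemble, Fin.last]

theorem aux_extend (n m T : ℕ) (D : Matrix (Fin n) (Fin n) ℝ) (K : Matrix (Fin m) (Fin n) ℝ)
    (Φx : Matrix (SIdx n T) (SIdx n T) ℝ) (Φu : Matrix (UIdx m T) (SIdx n T) ℝ) :
    ∃ (Ψx : Matrix (SIdx n (T + 1)) (SIdx n (T + 1)) ℝ)
      (Ψu : Matrix (UIdx m (T + 1)) (SIdx n (T + 1)) ℝ), ∀ δ,
      (∀ t i, (Ψx *ᵥ δ) (Fin.castSucc t, i) = (Φx *ᵥ auxTrunc n T δ) (t, i)) ∧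
      (∀ i, (Ψx *ᵥ δ) (Fin.last (T + 1), i) =
        (D *ᵥ fun j => (Φx *ᵥ auxTrunc n T δ) (Fin.last T, j)) i + δ (Fin.last (T + 1), i)) ∧
      (∀ t i, (Ψu *ᵥ δ) (Fin.castSucc t, i) = (Φu *ᵥ auxTrunc n T δ) (t, i)) ∧
      (∀ i, (Ψu *ᵥ δ) (Fin.last T, i) =
        (K *ᵥ fun j => (Φx *ᵥ auxTrunc n T δ) (Fin.last T, j)) i) := by
  let g : (SIdx n (T + 1) → ℝ) →ₗ[ℝ] (Fin n → ℝ) :=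
    LinearMap.funLeft ℝ ℝ (fun j => (Fin.last T, j)) ∘ₗ Φx.mulVecLin ∘ₗ auxTrunc n T
  let Lx : (SIdx n (T + 1) → ℝ) →ₗ[ℝ] (SIdx n (T + 1) → ℝ) :=
    LinearMap.pi fun p => Fin.lastCases (motive := fun _ => (SIdx n (T + 1) → ℝ) →ₗ[ℝ] ℝ)
      (LinearMap.proj p.2 ∘ₗ D.mulVecLin ∘ₗ g + LinearMap.proj (Fin.last (T + 1), p.2))
      (fun t => LinearMap.proj (t, p.2) ∘ₗ Φx.mulVecLin ∘ₗ auxTrunc n T) p.1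
  let Lu : (SIdx n (T + 1) → ℝ) →ₗ[ℝ] (UIdx m (T + 1) → ℝ) :=
    LinearMap.pi fun p => Fin.lastCases (motive := fun _ => (SIdx n (T + 1) → ℝ) →ₗ[ℝ] ℝ)
      (LinearMap.proj p.2 ∘ₗ K.mulVecLin ∘ₗ g)
      (fun t => LinearMap.proj (t, p.2) ∘ₗ Φu.mulVecLin ∘ₗ auxTrunc n T) p.1
  refine ⟨LinearMap.toMatrix' Lx, LinearMap.toMatrix' Lu, fun δ => ?_⟩
  rw [LinearMap.toMatrix'_mulVec, LinearMap.toMatrix'_mulVec]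
  refine ⟨fun t i => ?_, fun i => ?_, fun t i => ?_, fun i => ?_⟩
  · simp [Lx]
  · simp only [Lx, LinearMap.pi_apply, Fin.lastCases_last]; rfl
  · simp [Lu]
  · simp only [Lu, LinearMap.pi_apply, Fin.lastCases_last]; rfl

theorem aux_step (n m : ℕ)
    (A : Matrix (Fin n) (Fin n) ℝ) (B : Matrix (Fin n) (Fin m) ℝ)
    (Q : Matrix (Fin n) (Fin n) ℝ) (R : Matrix (Fin m) (Fin m) ℝ)
    (hQ : Q.PosSemidef) (hR : R.PosDef)
    (γf : ℝ) (P : Matrix (Fin n) (Fin n) ℝ) (hP : P.PosDef)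
    (Kf : Matrix (Fin m) (Fin n) ℝ)
    (hinf : ∀ x w : Fin n → ℝ, x ⬝ᵥ (Q *ᵥ x) + (Kf *ᵥ x) ⬝ᵥ (R *ᵥ (Kf *ᵥ x)) +
      ((A + B * Kf) *ᵥ x + w) ⬝ᵥ (P *ᵥ ((A + B * Kf) *ᵥ x + w)) ≤
      x ⬝ᵥ (P *ᵥ x) + γf ^ 2 * (w ⬝ᵥ w))
    (W : Set (Fin n → ℝ)) (Zc : Set ((Fin n → ℝ) × (Fin m → ℝ))) (Zf : Set (Fin n → ℝ))
    (hZfK : ∀ x ∈ Zf, (x, Kf *ᵥ x) ∈ Zc)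
    (hZfInv : ∀ x ∈ Zf, ∀ w ∈ W, (A + B * Kf) *ᵥ x + w ∈ Zf)
    (γ : ℝ) (hγf : 0 < γf) (hγ : γf ≤ γ) (T : ℕ) :
    Xset n m T A B Q R P W Zc Zf γ ⊆ Xset n m (T + 1) A B Q R P W Zc Zf γ := by
  rintro x0 ⟨Φx, Φu, ⟨hcx, hcu⟩, hach, hsafe, hlmi⟩
  obtain ⟨Ψx, Ψu, hΨ⟩ := aux_extend n m T (A + B * Kf) Kf Φx Φu
  rw [aux_ach_iff] at hach
  rw [aux_lmi_iff n m T A B Q R hQ hR P hP] at hlmi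
  refine ⟨Ψx, Ψu, ⟨?_, ?_⟩, ?_, ?_, ?_⟩
  · rintro ⟨t, i⟩ ⟨s, j⟩ hts
    have hcol : Ψx (t, i) (s, j) = (Ψx *ᵥ Pi.single (s, j) 1) (t, i) := by simp
    rw [hcol]
    simp only at hts
    revert hts
    refine Fin.lastCases (fun hts => ?_) (fun t hts => ?_) t
    · simp at hts; omega
    · rw [(hΨ _).1, Matrix.mulVec, dotProduct]
      refine Finset.sum_eq_zero fun q _ => ?_
      by_cases hq : ((q.1.castSucc, q.2) : SIdx n (T + 1)) = (s, j)
      · rw [hcx _ _ (by have := congrArg (fun z => (z.1 : ℕ)) hq; simp at this hts ⊢; omega),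
          zero_mul]
      · rw [aux_trunc_apply, Pi.single_eq_of_ne hq, mul_zero]
  · rintro ⟨t, i⟩ ⟨s, j⟩ hts
    have hcol : Ψu (t, i) (s, j) = (Ψu *ᵥ Pi.single (s, j) 1) (t, i) := by simp
    rw [hcol]
    simp only at hts
    revert hts
    refine Fin.lastCases (fun hts => ?_) (fun t hts => ?_) t
    · rw [(hΨ _).2.2.2]
      have h0 : auxTrunc n T (Pi.single (s, j) 1) = 0 := by
        ext q
        rw [aux_trunc_apply, Pi.single_eq_of_ne, Pi.zero_apply]
        intro hq
        have := congrArg (fun z => (z.1 : ℕ)) hq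
        have h3 := q.1.isLt
        simp at this hts; omega
      rw [h0]
      have h1 : (fun k => (Φx *ᵥ (0 : SIdx n T → ℝ)) (Fin.last T, k)) = 0 := by
        ext k; simp
      rw [h1]; simp
    · rw [(hΨ _).2.2.1, Matrix.mulVec, dotProduct]
      refine Finset.sum_eq_zero fun q _ => ?_
      by_cases hq : ((q.1.castSucc, q.2) : SIdx n (T + 1)) = (s, j)
      · rw [hcu _ _ (by have := congrArg (fun z => (z.1 : ℕ)) hq; simp at this hts ⊢; omega),
          zero_mul]
      · rw [aux_trunc_apply, Pi.single_eq_of_ne hq, mul_zero]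
  · rw [aux_ach_iff]
    intro δ
    obtain ⟨h1, h2, h3, h4⟩ := hΨ δ
    obtain ⟨d0, d1⟩ := hach (auxTrunc n T δ)
    refine ⟨fun i => ?_, fun t => ?_⟩
    · have := h1 0 i
      rw [Fin.castSucc_zero] at this
      rw [this, d0]; rfl
    · refine Fin.lastCases (fun i => ?_) (fun t i => ?_) t
      · rw [Fin.succ_last, h2]
        simp only [h1, h4]
        rw [Matrix.add_mulVec, ← mulVec_mulVec]
        rfl
      · rw [Fin.succ_castSucc, h1, d1]
        simp only [h1, h3]
        rfl
  · intro w hw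
    obtain ⟨h1, h2, h3, h4⟩ := hΨ (assemble n (T + 1) x0 w)
    rw [aux_trunc_assemble] at h1 h2 h3 h4
    obtain ⟨s1, s2⟩ := hsafe (fun c => w (c.1.castSucc, c.2)) (fun t => hw t.castSucc)
    refine ⟨fun t => ?_, ?_⟩
    · refine Fin.lastCases ?_ (fun t => ?_) t
      · simp only [h1, h4]
        exact hZfK _ s2
      · simp only [h1, h3]
        exact s1 t
    · simp only [h2, aux_assemble_last]
      exact hZfInv _ s2 _ (hw (Fin.last T))
  · rw [aux_lmi_iff n m (T + 1) A B Q R hQ hR P hP]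
    intro w
    obtain ⟨h1, h2, h3, h4⟩ := hΨ (assemble n (T + 1) 0 w)
    have hC := aux_C_mono n m T A B Q R hQ hR (assemble n (T + 1) 0 w)
    have htr : (fun p : SIdx n T => assemble n (T + 1) 0 w (p.1.castSucc, p.2)) =
      assemble n T 0 (fun c => w (c.1.castSucc, c.2)) := aux_trunc_assemble n T 0 w
    rw [htr] at hC
    rw [aux_trunc_assemble] at h1 h2 h3 h4
    have hl := hlmi (fun c => w (c.1.castSucc, c.2))
    unfold auxCost at hl ⊢
    rw [Fin.sum_univ_castSucc (n := T)]
    simp only [h1, h2, h3, h4, aux_assemble_last]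
    have hi := hinf (fun j => (Φx *ᵥ assemble n T 0 (fun c => w (c.1.castSucc, c.2)))
      (Fin.last T, j)) (fun j => w (Fin.last T, j))
    have hww : w ⬝ᵥ w = (fun c : Fin T × Fin n => w (c.1.castSucc, c.2)) ⬝ᵥ
        (fun c : Fin T × Fin n => w (c.1.castSucc, c.2)) +
        (fun j => w (Fin.last T, j)) ⬝ᵥ (fun j => w (Fin.last T, j)) := by
      simp only [dotProduct]
      rw [Fintype.sum_prod_type, Fin.sum_univ_castSucc, Fintype.sum_prod_type]
    have hnn : 0 ≤ (fun j => w (Fin.last T, j)) ⬝ᵥ (fun j => w (Fin.last T, j)) :=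
      Finset.sum_nonneg fun j _ => mul_self_nonneg _
    have hg : γf ^ 2 ≤ γ ^ 2 := pow_le_pow_left₀ hγf.le hγ 2
    have hg2 := mul_le_mul_of_nonneg_right hg hnn
    rw [hww, mul_add]
    change _ + (_ + _) + ((A + B * Kf) *ᵥ _ + _) ⬝ᵥ (P *ᵥ ((A + B * Kf) *ᵥ _ + _)) ≤ _
    linarith

theorem aux_zero (n m : ℕ)
    (A : Matrix (Fin n) (Fin n) ℝ) (B : Matrix (Fin n) (Fin m) ℝ)
    (Q : Matrix (Fin n) (Fin n) ℝ) (R : Matrix (Fin m) (Fin m) ℝ)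
    (P : Matrix (Fin n) (Fin n) ℝ)
    (W : Set (Fin n → ℝ)) (Zc : Set ((Fin n → ℝ) × (Fin m → ℝ))) (Zf : Set (Fin n → ℝ)) (γ : ℝ) :
    Zf ⊆ Xset n m 0 A B Q R P W Zc Zf γ := by
  intro x hx
  refine ⟨1, 0, ⟨?_, fun p => p.1.elim0⟩, ?_, ?_, ?_⟩
  · rintro ⟨p, i⟩ ⟨q, j⟩ h
    simp only at h
    omega
  · rw [aux_ach_iff]
    intro δ
    exact ⟨fun i => by simp, fun t => t.elim0⟩
  · intro w _
    refine ⟨fun t => t.elim0, ?_⟩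
    simpa [assemble] using hx
  · unfold lmiOK
    convert Matrix.PosSemidef.zero
    exact Subsingleton.elim _ _

/-- Proposition 2 (chain of inclusions of feasible sets): for every performance level
`γ ≥ γ_f`, one has `𝒵_f ⊆ X_1^γ`, and `X_T^γ ⊆ X_{T+1}^γ` for every horizon `T ≥ 1`. -/
theorem stmt16 (n m : ℕ) (hn : 0 < n) (hm : 0 < m)
    (A : Matrix (Fin n) (Fin n) ℝ) (B : Matrix (Fin n) (Fin m) ℝ)
    (Q : Matrix (Fin n) (Fin n) ℝ) (R : Matrix (Fin m) (Fin m) ℝ)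
    (hQ : Q.PosSemidef) (hR : R.PosDef)
    (γf : ℝ) (hγf : 0 < γf)
    (P : Matrix (Fin n) (Fin n) ℝ) (hP : P.PosDef)
    (hγP : (γf ^ 2 • (1 : Matrix (Fin n) (Fin n) ℝ) - P).PosDef)
    (Pbar : Matrix (Fin n) (Fin n) ℝ)
    (hPbar : Pbar = P + P * (γf ^ 2 • (1 : Matrix (Fin n) (Fin n) ℝ) - P)⁻¹ * P)
    (hRic : P = Q + Aᵀ * Pbar * A -
      Aᵀ * Pbar * B * (R + Bᵀ * Pbar * B)⁻¹ * Bᵀ * Pbar * A)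
    (Kf : Matrix (Fin m) (Fin n) ℝ)
    (hKf : Kf = -((R + Bᵀ * Pbar * B)⁻¹ * Bᵀ * Pbar * A))
    (W : Set (Fin n → ℝ)) (hWconv : Convex ℝ W) (hWcomp : IsCompact W)
    (hW0 : (0 : Fin n → ℝ) ∈ interior W)
    (Zc : Set ((Fin n → ℝ) × (Fin m → ℝ))) (hZcl : IsClosed Zc) (hZconv : Convex ℝ Zc)
    (hZ0 : ((0 : Fin n → ℝ), (0 : Fin m → ℝ)) ∈ interior Zc)
    (Zf : Set (Fin n → ℝ)) (hZfcl : IsClosed Zf) (hZfconv : Convex ℝ Zf)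
    (hZf0 : (0 : Fin n → ℝ) ∈ interior Zf)
    (hZfK : ∀ x ∈ Zf, (x, Kf *ᵥ x) ∈ Zc)
    (hZfInv : ∀ x ∈ Zf, ∀ w ∈ W, (A + B * Kf) *ᵥ x + w ∈ Zf) :
    ∀ γ : ℝ, γf ≤ γ →
      Zf ⊆ Xset n m 1 A B Q R P W Zc Zf γ ∧
      ∀ T : ℕ, 1 ≤ T →
        Xset n m T A B Q R P W Zc Zf γ ⊆ Xset n m (T + 1) A B Q R P W Zc Zf γ := by
  intro γ hγ
  have hinf := aux_hinf n m A B Q R hR γf P hP hγP Pbar hPbar hRic Kf hKf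
  have hstep := aux_step n m A B Q R hQ hR γf P hP Kf hinf W Zc Zf hZfK hZfInv γ hγf hγ
  exact ⟨(aux_zero n m A B Q R P W Zc Zf γ).trans (hstep 0), fun T _ => hstep T⟩

end
end

section
/- Monotonicity of the minimum gain function: defining γ*_T(x) = inf{γ ≥ 0 : Π_T^γ(x) ≠ ∅} (with inf ∅ = +∞), for every x ∈ ℝⁿ with Π_T^γ(x) nonempty for some γ ≥ 0, one has γ*_{T+1}(x) ≤ max{γ_f, γ*_T(x)}. -/
open Matrix

noncomputable section

/-- The minimum gain function `γ*_T(x) = inf {γ ≥ 0 : Π_T^γ(x) ≠ ∅}`. -/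
def gammaStar (n m T : ℕ) (A : Matrix (Fin n) (Fin n) ℝ) (B : Matrix (Fin n) (Fin m) ℝ)
    (Q : Matrix (Fin n) (Fin n) ℝ) (R : Matrix (Fin m) (Fin m) ℝ)
    (P : Matrix (Fin n) (Fin n) ℝ) (W : Set (Fin n → ℝ))
    (Zc : Set ((Fin n → ℝ) × (Fin m → ℝ))) (Zf : Set (Fin n → ℝ))
    (x : Fin n → ℝ) : ℝ :=
  sInf {γ : ℝ | 0 ≤ γ ∧ ∃ Φx Φu, memPi n m T A B Q R P W Zc Zf γ x Φx Φu}

namespace Aux17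

lemma Zshift_mulVec_zero (n T : ℕ) (v : SIdx n T → ℝ) (i : Fin n) :
    (Zshift n T *ᵥ v) (0, i) = 0 := by
  simp [Zshift, mulVec, dotProduct]

lemma Zshift_mulVec_succ (n T : ℕ) (v : SIdx n T → ℝ) (t : Fin T) (i : Fin n) :
    (Zshift n T *ᵥ v) (t.succ, i) = v (t.castSucc, i) := by
  simp only [Zshift, mulVec, dotProduct, of_apply, ite_mul, one_mul, zero_mul]
  rw [Finset.sum_eq_single (t.castSucc, i)]
  · simp
  · rintro ⟨s, j⟩ _ hne
    rw [if_neg]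
    rintro ⟨h1, h2⟩
    apply hne
    simp only [Fin.val_succ] at h1
    ext
    · simp; omega
    · simp at h2; simp [h2]
  · simp

lemma bigA_mulVec (n T : ℕ) (A : Matrix (Fin n) (Fin n) ℝ) (v : SIdx n T → ℝ)
    (t : Fin (T+1)) (i : Fin n) :
    (bigA n T A *ᵥ v) (t, i) = (A *ᵥ fun k => v (t, k)) i := by
  simp [bigA, mulVec, dotProduct, Fintype.sum_prod_type, ite_mul]

lemma bigB_mulVec (n m T : ℕ) (B : Matrix (Fin n) (Fin m) ℝ) (u : UIdx m T → ℝ)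
    (t : Fin T) (i : Fin n) :
    (bigB n m T B *ᵥ u) (t.castSucc, i) = (B *ᵥ fun k => u (t, k)) i := by
  simp [bigB, mulVec, dotProduct, Fintype.sum_prod_type, ite_mul]
  rw [Finset.sum_eq_single t]
  · simp
  · intro b _ hb
    rw [if_neg]
    intro h; apply hb; ext; exact h.symm
  · simp

def Traj (n m T : ℕ) (A : Matrix (Fin n) (Fin n) ℝ) (B : Matrix (Fin n) (Fin m) ℝ)
    (x : SIdx n T → ℝ) (u : UIdx m T → ℝ) (δ : SIdx n T → ℝ) : Prop :=
  (∀ i, x (0, i) = δ (0, i)) ∧ ∀ (t : Fin T) i,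
    x (t.succ, i) = (A *ᵥ fun k => x (t.castSucc, k)) i + (B *ᵥ fun k => u (t, k)) i
      + δ (t.succ, i)

lemma traj_iff (n m T : ℕ) (A : Matrix (Fin n) (Fin n) ℝ) (B : Matrix (Fin n) (Fin m) ℝ)
    (x : SIdx n T → ℝ) (u : UIdx m T → ℝ) (δ : SIdx n T → ℝ) :
    Traj n m T A B x u δ ↔
      (1 - Zshift n T * bigA n T A) *ᵥ x - (Zshift n T * bigB n m T B) *ᵥ u = δ := by
  rw [sub_mulVec, one_mulVec, ← mulVec_mulVec, ← mulVec_mulVec]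
  constructor
  · rintro ⟨h0, h1⟩
    ext ⟨t, i⟩
    simp only [Pi.sub_apply]
    induction t using Fin.cases with
    | zero => rw [Zshift_mulVec_zero, Zshift_mulVec_zero, h0]; simp
    | succ t =>
      rw [Zshift_mulVec_succ, Zshift_mulVec_succ, bigA_mulVec, bigB_mulVec, h1]; ring
  · rintro rfl
    refine ⟨fun i => ?_, fun t i => ?_⟩
    · simp only [Pi.sub_apply]
      rw [Zshift_mulVec_zero, Zshift_mulVec_zero]; simp
    · simp only [Pi.sub_apply]
      rw [Zshift_mulVec_succ, Zshift_mulVec_succ, bigA_mulVec, bigB_mulVec]; ring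

lemma achievable_iff (n m T : ℕ) (A : Matrix (Fin n) (Fin n) ℝ) (B : Matrix (Fin n) (Fin m) ℝ)
    (Φx : Matrix (SIdx n T) (SIdx n T) ℝ) (Φu : Matrix (UIdx m T) (SIdx n T) ℝ) :
    achievablePair n m T A B Φx Φu ↔ ∀ δ, Traj n m T A B (Φx *ᵥ δ) (Φu *ᵥ δ) δ := by
  simp only [traj_iff, achievablePair]
  constructor
  · intro h δ
    rw [mulVec_mulVec, mulVec_mulVec, ← sub_mulVec, h, one_mulVec]
  · intro h
    apply Matrix.ext_of_mulVec_single
    intro i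
    rw [one_mulVec, sub_mulVec, ← mulVec_mulVec, ← mulVec_mulVec]
    exact h _

lemma isUnit_IZA (n T : ℕ) (A : Matrix (Fin n) (Fin n) ℝ) :
    IsUnit (1 - Zshift n T * bigA n T A) := by
  rw [← mulVec_injective_iff_isUnit]
  rw [← coe_mulVecLin, ← LinearMap.ker_eq_bot, LinearMap.ker_eq_bot']
  intro x hx
  have h : Traj n 0 T A 0 x 0 0 := by
    rw [traj_iff, mulVec_zero, sub_zero]; exact hx
  have key : ∀ (t : Fin (T+1)), (fun k => x (t, k)) = 0 := by
    intro t
    induction t using Fin.induction with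
    | zero => ext k; simpa using h.1 k
    | succ t ih => ext k; simp [h.2 t k, ih]
  ext ⟨t, k⟩
  exact congrFun (key t) k

lemma traj_eq (n m T : ℕ) (A : Matrix (Fin n) (Fin n) ℝ) (B : Matrix (Fin n) (Fin m) ℝ)
    (x : SIdx n T → ℝ) (u : UIdx m T → ℝ) (δ : SIdx n T → ℝ) :
    Traj n m T A B x u δ ↔ x = bigF n m T A B *ᵥ u + bigG n T A *ᵥ δ := by
  have hu := isUnit_IZA n T A
  have hd := (isUnit_iff_isUnit_det _).1 hu
  rw [traj_iff, bigF, bigG, ← mulVec_mulVec u (1 - Zshift n T * bigA n T A)⁻¹, ← mulVec_add]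
  constructor
  · rintro rfl
    rw [add_sub_cancel, mulVec_mulVec, nonsing_inv_mul _ hd, one_mulVec]
  · rintro rfl
    rw [mulVec_mulVec, mul_nonsing_inv _ hd, one_mulVec, add_sub_cancel_left]

lemma qf_bigQ (n T : ℕ) (Q : Matrix (Fin n) (Fin n) ℝ) (x : SIdx n T → ℝ) :
    x ⬝ᵥ (bigQ n T Q *ᵥ x) =
      ∑ t : Fin T, (fun k => x (t.castSucc, k)) ⬝ᵥ (Q *ᵥ fun k => x (t.castSucc, k)) := by
  have h1 : ∀ (t : Fin T) i, (bigQ n T Q *ᵥ x) (t.castSucc, i)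
      = (Q *ᵥ fun k => x (t.castSucc, k)) i := by
    intro t i
    simp [bigQ, mulVec, dotProduct, Fintype.sum_prod_type, ite_mul]
  have h2 : ∀ i, (bigQ n T Q *ᵥ x) (Fin.last T, i) = 0 := by
    intro i
    simp [bigQ, mulVec, dotProduct]
  rw [dotProduct, Fintype.sum_prod_type, Fin.sum_univ_castSucc]
  simp only [h1, h2]
  simp [dotProduct]

lemma qf_bigQbar (n T : ℕ) (Q P : Matrix (Fin n) (Fin n) ℝ) (x : SIdx n T → ℝ) :
    x ⬝ᵥ (bigQbar n T Q P *ᵥ x) =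
      ∑ t : Fin T, (fun k => x (t.castSucc, k)) ⬝ᵥ (Q *ᵥ fun k => x (t.castSucc, k))
      + (fun k => x (Fin.last T, k)) ⬝ᵥ (P *ᵥ fun k => x (Fin.last T, k)) := by
  have h1 : ∀ (t : Fin T) i, (bigQbar n T Q P *ᵥ x) (t.castSucc, i)
      = (Q *ᵥ fun k => x (t.castSucc, k)) i := by
    intro t i
    simp [bigQbar, mulVec, dotProduct, Fintype.sum_prod_type, ite_mul]
  have h2 : ∀ i, (bigQbar n T Q P *ᵥ x) (Fin.last T, i)
      = (P *ᵥ fun k => x (Fin.last T, k)) i := by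
    intro i
    simp [bigQbar, mulVec, dotProduct, Fintype.sum_prod_type, ite_mul]
  rw [dotProduct, Fintype.sum_prod_type, Fin.sum_univ_castSucc]
  simp only [h1, h2]
  simp [dotProduct]

lemma qf_bigR (m T : ℕ) (R : Matrix (Fin m) (Fin m) ℝ) (u : UIdx m T → ℝ) :
    u ⬝ᵥ (bigR m T R *ᵥ u) =
      ∑ t : Fin T, (fun k => u (t, k)) ⬝ᵥ (R *ᵥ fun k => u (t, k)) := by
  have h1 : ∀ (t : Fin T) i, (bigR m T R *ᵥ u) (t, i)
      = (R *ᵥ fun k => u (t, k)) i := by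
    intro t i
    simp [bigR, mulVec, dotProduct, Fintype.sum_prod_type, ite_mul]
  rw [dotProduct, Fintype.sum_prod_type]
  simp only [h1]
  simp [dotProduct]

lemma bigQ_psd (n T : ℕ) (Q : Matrix (Fin n) (Fin n) ℝ) (hQ : Q.PosSemidef) :
    (bigQ n T Q).PosSemidef := by
  refine PosSemidef.of_dotProduct_mulVec_nonneg ?_ ?_
  · ext ⟨t, i⟩ ⟨s, j⟩
    have := hQ.1.apply i j
    simp [bigQ] at this ⊢
    by_cases h : s = t
    · subst h; simp [this]
    · simp [h, Ne.symm h]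
  · intro x
    rw [star_trivial, qf_bigQ]
    exact Finset.sum_nonneg fun t _ => by simpa using hQ.dotProduct_mulVec_nonneg _

lemma bigR_pd (m T : ℕ) (R : Matrix (Fin m) (Fin m) ℝ) (hR : R.PosDef) :
    (bigR m T R).PosDef := by
  refine PosDef.of_dotProduct_mulVec_pos ?_ ?_
  · ext ⟨t, i⟩ ⟨s, j⟩
    have := hR.1.apply i j
    simp [bigR] at this ⊢
    by_cases h : s = t
    · subst h; simp [this]
    · simp [h, Ne.symm h]
  · intro x hx
    rw [star_trivial, qf_bigR]
    have ⟨⟨t, k⟩, hk⟩ := Function.ne_iff.1 hx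
    refine Finset.sum_pos' (fun t _ => by simpa using hR.posSemidef.dotProduct_mulVec_nonneg _)
      ⟨t, Finset.mem_univ _, ?_⟩
    have : (fun k => x (t, k)) ≠ 0 := fun h => hk (congrFun h k)
    simpa using hR.dotProduct_mulVec_pos this

/-- completion of squares -/
lemma complete_sq {ι : Type*} [Fintype ι] [DecidableEq ι] (M : Matrix ι ι ℝ) (hM : M.PosDef)
    (w y : ι → ℝ) :
    w ⬝ᵥ (M *ᵥ w) - 2 * (w ⬝ᵥ y) =
      (w - M⁻¹ *ᵥ y) ⬝ᵥ (M *ᵥ (w - M⁻¹ *ᵥ y)) - y ⬝ᵥ (M⁻¹ *ᵥ y) := by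
  have hd : IsUnit M.det := (isUnit_iff_isUnit_det _).1 hM.isUnit
  have hT : Mᵀ = M := by simpa using hM.1.eq
  have h1 : M *ᵥ (M⁻¹ *ᵥ y) = y := by
    rw [mulVec_mulVec, mul_nonsing_inv _ hd, one_mulVec]
  have h2 : (M⁻¹ *ᵥ y) ⬝ᵥ (M *ᵥ w) = y ⬝ᵥ w := by
    rw [dotProduct_mulVec, ← mulVec_transpose, hT, h1]
  rw [mulVec_sub, h1, sub_dotProduct, dotProduct_sub, dotProduct_sub, h2,
    dotProduct_comm y w, dotProduct_comm (M⁻¹ *ᵥ y) y]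
  ring

section clair
variable {ι κ : Type*} [Fintype ι] [DecidableEq ι] [Fintype κ] [DecidableEq κ]
  (F : Matrix ι κ ℝ) (G Q : Matrix ι ι ℝ) (R : Matrix κ κ ℝ)

lemma E_pd (hQ : Q.PosSemidef) (hR : R.PosDef) : (R + Fᵀ * Q * F).PosDef := by
  have := hQ.conjTranspose_mul_mul_same F
  rw [conjTranspose_eq_transpose_of_trivial] at this
  exact hR.add_posSemidef this

lemma woodbury (hQ : Q.PosSemidef) (hR : R.PosDef) :
    (1 + F * R⁻¹ * Fᵀ * Q)⁻¹ = 1 - F * (R + Fᵀ * Q * F)⁻¹ * Fᵀ * Q := by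
  apply inv_eq_right_inv
  have hE := E_pd F Q R hQ hR
  have hdR : IsUnit R.det := (isUnit_iff_isUnit_det _).1 hR.isUnit
  have hdE : IsUnit (R + Fᵀ * Q * F).det := (isUnit_iff_isUnit_det _).1 hE.isUnit
  generalize hEE : (R + Fᵀ * Q * F) = E at *
  have h : R⁻¹ = E⁻¹ + R⁻¹ * (Fᵀ * Q * F) * E⁻¹ := by
    have h1 : R⁻¹ * (R + Fᵀ * Q * F) * E⁻¹ = R⁻¹ := by
      rw [hEE, mul_assoc, mul_nonsing_inv _ hdE, mul_one]
    rw [mul_add, nonsing_inv_mul _ hdR, add_mul, one_mul] at h1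
    exact h1.symm
  have h3 : F * R⁻¹ * Fᵀ * Q = F * E⁻¹ * Fᵀ * Q
      + F * R⁻¹ * Fᵀ * Q * (F * E⁻¹ * Fᵀ * Q) := by
    conv_lhs => rw [h]
    simp only [Matrix.mul_add, Matrix.add_mul, Matrix.mul_assoc]
  rw [mul_sub, mul_one, add_mul, one_mul]
  conv_lhs => rw [add_sub_assoc]
  conv_lhs => enter [2, 1]; rw [h3]
  abel

lemma C_eq (hQ : Q.PosSemidef) (hR : R.PosDef) :
    Gᵀ * Q * (1 + F * R⁻¹ * Fᵀ * Q)⁻¹ * G =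
      Gᵀ * (Q - Q * F * (R + Fᵀ * Q * F)⁻¹ * Fᵀ * Q) * G := by
  rw [woodbury F Q R hQ hR]
  simp only [Matrix.mul_sub, Matrix.mul_one, Matrix.mul_assoc]

lemma C_symm (hQ : Q.PosSemidef) (hR : R.PosDef) :
    (Gᵀ * Q * (1 + F * R⁻¹ * Fᵀ * Q)⁻¹ * G).IsHermitian := by
  rw [C_eq F G Q R hQ hR]
  have hE := (E_pd F Q R hQ hR).1.inv
  have hQT : Qᵀ = Q := by simpa using hQ.1.eq
  unfold IsHermitian at hE ⊢
  rw [conjTranspose_eq_transpose_of_trivial] at hE ⊢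
  generalize (R + Fᵀ * Q * F)⁻¹ = Ei at *
  simp only [transpose_mul, transpose_sub, transpose_transpose, hQT, hE, Matrix.mul_assoc]

lemma cost_eq (hQ : Q.PosSemidef) (hR : R.PosDef) (u : κ → ℝ) (δ : ι → ℝ) :
    (F *ᵥ u + G *ᵥ δ) ⬝ᵥ (Q *ᵥ (F *ᵥ u + G *ᵥ δ)) + u ⬝ᵥ (R *ᵥ u) =
      δ ⬝ᵥ ((Gᵀ * Q * (1 + F * R⁻¹ * Fᵀ * Q)⁻¹ * G) *ᵥ δ) +
      (u - (R + Fᵀ * Q * F)⁻¹ *ᵥ (-(Fᵀ *ᵥ (Q *ᵥ (G *ᵥ δ))))) ⬝ᵥ ((R + Fᵀ * Q * F) *ᵥ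
        (u - (R + Fᵀ * Q * F)⁻¹ *ᵥ (-(Fᵀ *ᵥ (Q *ᵥ (G *ᵥ δ)))))) := by
  rw [C_eq F G Q R hQ hR]
  have hE := E_pd F Q R hQ hR
  have hQT : Qᵀ = Q := by simpa using hQ.1.eq
  have h := complete_sq _ hE u (-(Fᵀ *ᵥ (Q *ᵥ (G *ᵥ δ))))
  rw [eq_sub_iff_add_eq] at h
  rw [← h]
  generalize (R + Fᵀ * Q * F)⁻¹ = Ei
  have a1 : ∀ v, δ ⬝ᵥ (Gᵀ *ᵥ v) = (G *ᵥ δ) ⬝ᵥ v := fun v => by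
    rw [dotProduct_mulVec, vecMul_transpose]
  have a2 : ∀ u v, u ⬝ᵥ (Fᵀ *ᵥ v) = (F *ᵥ u) ⬝ᵥ v := fun u v => by
    rw [dotProduct_mulVec, vecMul_transpose]
  have a3 : ∀ u v, u ⬝ᵥ (Q *ᵥ v) = (Q *ᵥ u) ⬝ᵥ v := fun u v => by
    rw [dotProduct_mulVec, ← mulVec_transpose, hQT]
  have a4 : ∀ u v, (Fᵀ *ᵥ u) ⬝ᵥ v = u ⬝ᵥ (F *ᵥ v) := fun u v => by
    rw [dotProduct_comm, a2, dotProduct_comm]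
  simp only [← mulVec_mulVec, add_mulVec, sub_mulVec, mulVec_add, dotProduct_add,
    add_dotProduct, dotProduct_sub, dotProduct_neg, neg_dotProduct, mulVec_neg, a1, a2, a4]
  generalize G *ᵥ δ = g
  rw [a3 g (F *ᵥ u), a3 g (F *ᵥ _), dotProduct_comm (Q *ᵥ g) (F *ᵥ u)]
  ring
end clair

lemma riccati_step (n m : ℕ) (A : Matrix (Fin n) (Fin n) ℝ) (B : Matrix (Fin n) (Fin m) ℝ)
    (Q : Matrix (Fin n) (Fin n) ℝ) (R : Matrix (Fin m) (Fin m) ℝ)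
    (hR : R.PosDef)
    (γf : ℝ)
    (P : Matrix (Fin n) (Fin n) ℝ) (hP : P.PosDef)
    (hγP : (γf ^ 2 • (1 : Matrix (Fin n) (Fin n) ℝ) - P).PosDef)
    (Pbar : Matrix (Fin n) (Fin n) ℝ)
    (hPbar : Pbar = P + P * (γf ^ 2 • (1 : Matrix (Fin n) (Fin n) ℝ) - P)⁻¹ * P)
    (hRic : P = Q + Aᵀ * Pbar * A -
      Aᵀ * Pbar * B * (R + Bᵀ * Pbar * B)⁻¹ * Bᵀ * Pbar * A)
    (Kf : Matrix (Fin m) (Fin n) ℝ)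
    (hKf : Kf = -((R + Bᵀ * Pbar * B)⁻¹ * Bᵀ * Pbar * A)) (x w : Fin n → ℝ) :
    x ⬝ᵥ (Q *ᵥ x) + (Kf *ᵥ x) ⬝ᵥ (R *ᵥ (Kf *ᵥ x)) +
      ((A + B * Kf) *ᵥ x + w) ⬝ᵥ (P *ᵥ ((A + B * Kf) *ᵥ x + w)) ≤
      x ⬝ᵥ (P *ᵥ x) + γf ^ 2 * (w ⬝ᵥ w) := by
  have hPT : Pᵀ = P := by simpa using hP.1.eq
  have hPb : Pbar.PosSemidef := by
    rw [hPbar]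
    have := hγP.inv.posSemidef.conjTranspose_mul_mul_same P
    rw [conjTranspose_eq_transpose_of_trivial, hPT] at this
    exact hP.posSemidef.add this
  have hE := E_pd B Pbar R hPb hR
  have hdE : IsUnit (R + Bᵀ * Pbar * B).det := (isUnit_iff_isUnit_det _).1 hE.isUnit
  have hHK : (R + Bᵀ * Pbar * B) * Kf = -(Bᵀ * Pbar * A) := by
    rw [hKf, Matrix.mul_neg, Matrix.mul_assoc _ Bᵀ, Matrix.mul_assoc _ (Bᵀ * Pbar),
      mul_nonsing_inv_cancel_left _ _ hdE]
  have hmat : Q + Kfᵀ * R * Kf + (A + B * Kf)ᵀ * Pbar * (A + B * Kf) = P := by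
    have e1 : Aᵀ * Pbar * B * (R + Bᵀ * Pbar * B)⁻¹ * Bᵀ * Pbar * A
        = - (Aᵀ * Pbar * B * Kf) := by
      rw [hKf]; simp only [Matrix.mul_neg, neg_neg, Matrix.mul_assoc]
    have e2 : Kfᵀ * R * Kf + Kfᵀ * Bᵀ * Pbar * B * Kf = - (Kfᵀ * Bᵀ * Pbar * A) := by
      have := congrArg (fun X => Kfᵀ * X) hHK
      simpa only [Matrix.mul_add, Matrix.add_mul, Matrix.mul_neg, Matrix.mul_assoc] using this
    rw [e1] at hRic
    calc _ = Q + Aᵀ * Pbar * A + Aᵀ * Pbar * B * Kf + Kfᵀ * Bᵀ * Pbar * A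
          + (Kfᵀ * R * Kf + Kfᵀ * Bᵀ * Pbar * B * Kf) := by
            simp only [transpose_add, transpose_mul, Matrix.mul_add, Matrix.add_mul, Matrix.mul_assoc]
            abel
      _ = Q + Aᵀ * Pbar * A - -(Aᵀ * Pbar * B * Kf) := by rw [e2]; abel
      _ = P := hRic.symm
  have hq : x ⬝ᵥ (P *ᵥ x) = x ⬝ᵥ (Q *ᵥ x) + (Kf *ᵥ x) ⬝ᵥ (R *ᵥ (Kf *ᵥ x)) +
      ((A + B * Kf) *ᵥ x) ⬝ᵥ (Pbar *ᵥ ((A + B * Kf) *ᵥ x)) := by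
    conv_lhs => rw [← hmat]
    rw [add_mulVec, add_mulVec, dotProduct_add, dotProduct_add]
    congr 1
    · congr 1
      rw [Matrix.mul_assoc, ← mulVec_mulVec, ← mulVec_mulVec, dotProduct_mulVec, vecMul_transpose]
    · rw [Matrix.mul_assoc, ← mulVec_mulVec, ← mulVec_mulVec, dotProduct_mulVec, vecMul_transpose]
  rw [hq]
  generalize (A + B * Kf) *ᵥ x = y
  have hc := complete_sq _ hγP w (P *ᵥ y)
  have hnn := hγP.posSemidef.dotProduct_mulVec_nonneg
    (w - (γf ^ 2 • (1 : Matrix (Fin n) (Fin n) ℝ) - P)⁻¹ *ᵥ (P *ᵥ y))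
  rw [star_trivial] at hnn
  have h4 : y ⬝ᵥ (Pbar *ᵥ y) = y ⬝ᵥ (P *ᵥ y) + (P *ᵥ y) ⬝ᵥ
      ((γf ^ 2 • (1 : Matrix (Fin n) (Fin n) ℝ) - P)⁻¹ *ᵥ (P *ᵥ y)) := by
    rw [hPbar, add_mulVec, dotProduct_add, Matrix.mul_assoc, ← mulVec_mulVec, ← mulVec_mulVec,
      dotProduct_mulVec y P (_ *ᵥ _), ← mulVec_transpose P y, hPT]
  have h5 : w ⬝ᵥ ((γf ^ 2 • (1 : Matrix (Fin n) (Fin n) ℝ) - P) *ᵥ w)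
      = γf ^ 2 * (w ⬝ᵥ w) - w ⬝ᵥ (P *ᵥ w) := by
    rw [sub_mulVec, dotProduct_sub, smul_mulVec, one_mulVec, dotProduct_smul, smul_eq_mul]
  have h6 : y ⬝ᵥ (P *ᵥ w) = w ⬝ᵥ (P *ᵥ y) := by
    rw [dotProduct_mulVec, ← mulVec_transpose, hPT, dotProduct_comm]
  rw [mulVec_add, dotProduct_add, add_dotProduct, add_dotProduct, h6, h4]
  linarith

def trunc {k : ℕ} {T : ℕ} (v : Fin (T + 1) × Fin k → ℝ) : Fin T × Fin k → ℝ :=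
  fun p => v (p.1.castSucc, p.2)

lemma costJ_eq_sum (n m T : ℕ) (A : Matrix (Fin n) (Fin n) ℝ) (B : Matrix (Fin n) (Fin m) ℝ)
    (Q : Matrix (Fin n) (Fin n) ℝ) (R : Matrix (Fin m) (Fin m) ℝ)
    (x : SIdx n T → ℝ) (u : UIdx m T → ℝ) (δ : SIdx n T → ℝ) (h : Traj n m T A B x u δ) :
    costJ n m T A B Q R u δ =
      ∑ t : Fin T, (fun k => x (t.castSucc, k)) ⬝ᵥ (Q *ᵥ fun k => x (t.castSucc, k)) +
      ∑ t : Fin T, (fun k => u (t, k)) ⬝ᵥ (R *ᵥ fun k => u (t, k)) := by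
  rw [traj_eq] at h
  simp only [costJ]
  rw [← h, qf_bigQ, qf_bigR]

lemma traj_trunc (n m T : ℕ) (A : Matrix (Fin n) (Fin n) ℝ) (B : Matrix (Fin n) (Fin m) ℝ)
    (x : SIdx n (T+1) → ℝ) (u : UIdx m (T+1) → ℝ) (δ : SIdx n (T+1) → ℝ)
    (h : Traj n m (T+1) A B x u δ) : Traj n m T A B (trunc x) (trunc u) (trunc δ) := by
  refine ⟨fun i => h.1 i, fun t i => ?_⟩
  have := h.2 t.castSucc i
  simpa only [trunc, Fin.succ_castSucc] using this

lemma C_le (n m T : ℕ) (A : Matrix (Fin n) (Fin n) ℝ) (B : Matrix (Fin n) (Fin m) ℝ)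
    (Q : Matrix (Fin n) (Fin n) ℝ) (R : Matrix (Fin m) (Fin m) ℝ)
    (hQ : Q.PosSemidef) (hR : R.PosDef) (u : UIdx m T → ℝ) (δ : SIdx n T → ℝ) :
    δ ⬝ᵥ (Cmat n m T A B Q R *ᵥ δ) ≤ costJ n m T A B Q R u δ := by
  have hb := bigQ_psd n T Q hQ
  have hr := bigR_pd m T R hR
  have hc := cost_eq (bigF n m T A B) (bigG n T A) _ _ hb hr u δ
  have hE := E_pd (bigF n m T A B) _ _ hb hr
  have := hE.posSemidef.dotProduct_mulVec_nonneg (u - (bigR m T R + (bigF n m T A B)ᵀ *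
    bigQ n T Q * (bigF n m T A B))⁻¹ *ᵥ
      (-((bigF n m T A B)ᵀ *ᵥ (bigQ n T Q *ᵥ (bigG n T A *ᵥ δ)))))
  rw [star_trivial] at this
  simp only [costJ, Cmat]
  linarith

lemma C_attained (n m T : ℕ) (A : Matrix (Fin n) (Fin n) ℝ) (B : Matrix (Fin n) (Fin m) ℝ)
    (Q : Matrix (Fin n) (Fin n) ℝ) (R : Matrix (Fin m) (Fin m) ℝ)
    (hQ : Q.PosSemidef) (hR : R.PosDef) (δ : SIdx n T → ℝ) :
    ∃ u, costJ n m T A B Q R u δ = δ ⬝ᵥ (Cmat n m T A B Q R *ᵥ δ) := by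
  have hb := bigQ_psd n T Q hQ
  have hr := bigR_pd m T R hR
  refine ⟨(bigR m T R + (bigF n m T A B)ᵀ *
    bigQ n T Q * (bigF n m T A B))⁻¹ *ᵥ
      (-((bigF n m T A B)ᵀ *ᵥ (bigQ n T Q *ᵥ (bigG n T A *ᵥ δ)))), ?_⟩
  simp only [costJ, Cmat]
  rw [cost_eq (bigF n m T A B) (bigG n T A) _ _ hb hr, sub_self, zero_dotProduct, add_zero]

lemma C_mono (n m T : ℕ) (A : Matrix (Fin n) (Fin n) ℝ) (B : Matrix (Fin n) (Fin m) ℝ)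
    (Q : Matrix (Fin n) (Fin n) ℝ) (R : Matrix (Fin m) (Fin m) ℝ)
    (hQ : Q.PosSemidef) (hR : R.PosDef) (δ : SIdx n (T+1) → ℝ) :
    (trunc δ : SIdx n T → ℝ) ⬝ᵥ (Cmat n m T A B Q R *ᵥ trunc δ) ≤
      δ ⬝ᵥ (Cmat n m (T+1) A B Q R *ᵥ δ) := by
  obtain ⟨u, hu⟩ := C_attained n m (T+1) A B Q R hQ hR δ
  rw [← hu]
  refine (C_le n m T A B Q R hQ hR (trunc u) (trunc δ)).trans ?_
  have h := (traj_eq n m (T+1) A B _ u δ).2 rfl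
  rw [costJ_eq_sum n m (T+1) A B Q R _ _ _ h, costJ_eq_sum n m T A B Q R _ _ _
    (traj_trunc _ _ _ _ _ _ _ _ h)]
  generalize bigF n m (T+1) A B *ᵥ u + bigG n (T+1) A *ᵥ δ = x
  rw [Fin.sum_univ_castSucc, Fin.sum_univ_castSucc (n := T)
    (f := fun t => (fun k => u (t, k)) ⬝ᵥ (R *ᵥ fun k => u (t, k)))]
  have h1 := hQ.dotProduct_mulVec_nonneg (fun k => x ((Fin.last T).castSucc, k))
  have h2 := hR.posSemidef.dotProduct_mulVec_nonneg (fun k => u ((Fin.last T), k))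
  rw [star_trivial] at h1 h2
  simp only [trunc]
  linarith

def extX (n m T : ℕ) (A : Matrix (Fin n) (Fin n) ℝ) (B : Matrix (Fin n) (Fin m) ℝ)
    (K : Matrix (Fin m) (Fin n) ℝ) (Φx : Matrix (SIdx n T) (SIdx n T) ℝ) :
    Matrix (SIdx n (T+1)) (SIdx n (T+1)) ℝ :=
  Matrix.of fun p q => Fin.lastCases (motive := fun _ => ℝ)
    (Fin.lastCases (motive := fun _ => ℝ) (if p.2 = q.2 then 1 else 0)
      (fun s => ∑ k, (A + B * K) p.2 k * Φx (Fin.last T, k) (s, q.2)) q.1)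
    (fun t => Fin.lastCases (motive := fun _ => ℝ) 0 (fun s => Φx (t, p.2) (s, q.2)) q.1) p.1

def extU (n m T : ℕ)
    (K : Matrix (Fin m) (Fin n) ℝ) (Φx : Matrix (SIdx n T) (SIdx n T) ℝ)
    (Φu : Matrix (UIdx m T) (SIdx n T) ℝ) :
    Matrix (UIdx m (T+1)) (SIdx n (T+1)) ℝ :=
  Matrix.of fun p q => Fin.lastCases (motive := fun _ => ℝ)
    (Fin.lastCases (motive := fun _ => ℝ) 0
      (fun s => ∑ k, K p.2 k * Φx (Fin.last T, k) (s, q.2)) q.1)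
    (fun t => Fin.lastCases (motive := fun _ => ℝ) 0 (fun s => Φu (t, p.2) (s, q.2)) q.1) p.1

section ext
variable (n m T : ℕ) (A : Matrix (Fin n) (Fin n) ℝ) (B : Matrix (Fin n) (Fin m) ℝ)
    (K : Matrix (Fin m) (Fin n) ℝ) (Φx : Matrix (SIdx n T) (SIdx n T) ℝ)
    (Φu : Matrix (UIdx m T) (SIdx n T) ℝ) (δ : SIdx n (T+1) → ℝ)

lemma extX_castSucc (t : Fin (T+1)) (i : Fin n) :
    (extX n m T A B K Φx *ᵥ δ) (t.castSucc, i) = (Φx *ᵥ trunc δ) (t, i) := by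
  simp [extX, trunc, mulVec, dotProduct, Fintype.sum_prod_type, Fin.sum_univ_castSucc (n := T+1)]

lemma extX_last (i : Fin n) :
    (extX n m T A B K Φx *ᵥ δ) (Fin.last (T+1), i) =
      ((A + B * K) *ᵥ fun k => (Φx *ᵥ trunc δ) (Fin.last T, k)) i + δ (Fin.last (T+1), i) := by
  simp only [extX, trunc, mulVec, dotProduct, Fintype.sum_prod_type, of_apply, Fin.lastCases_last]
  rw [Fin.sum_univ_castSucc]
  simp only [Fin.lastCases_last, Fin.lastCases_castSucc, Finset.sum_mul, Finset.mul_sum]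
  congr 1
  · symm
    rw [Finset.sum_comm]
    refine Finset.sum_congr rfl fun s _ => ?_
    rw [Finset.sum_comm]
    simp only [mul_assoc]
  · simp

lemma extU_castSucc (t : Fin T) (i : Fin m) :
    (extU n m T K Φx Φu *ᵥ δ) (t.castSucc, i) = (Φu *ᵥ trunc δ) (t, i) := by
  simp only [extU, trunc, mulVec, dotProduct, Fintype.sum_prod_type, of_apply,
    Fin.lastCases_castSucc]
  rw [Fin.sum_univ_castSucc]
  simp

lemma extU_last (i : Fin m) :
    (extU n m T K Φx Φu *ᵥ δ) (Fin.last T, i) =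
      (K *ᵥ fun k => (Φx *ᵥ trunc δ) (Fin.last T, k)) i := by
  simp only [extU, trunc, mulVec, dotProduct, Fintype.sum_prod_type, of_apply, Fin.lastCases_last]
  rw [Fin.sum_univ_castSucc]
  simp only [Fin.lastCases_last, Fin.lastCases_castSucc, Finset.sum_mul, Finset.mul_sum,
    zero_mul, Finset.sum_const_zero, add_zero]
  symm
  rw [Finset.sum_comm]
  refine Finset.sum_congr rfl fun s _ => ?_
  rw [Finset.sum_comm]
  simp only [mul_assoc]

lemma ext_causal (h : causalPair n m T Φx Φu) :
    causalPair n m (T+1) (extX n m T A B K Φx) (extU n m T K Φx Φu) := by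
  refine ⟨?_, ?_⟩
  · rintro ⟨t, i⟩ ⟨s, j⟩ hts
    induction t using Fin.lastCases with
    | last => simp at hts; omega
    | cast t =>
      induction s using Fin.lastCases with
      | last => simp [extX]
      | cast s => simpa [extX] using h.1 (t, i) (s, j) (by simpa using hts)
  · rintro ⟨t, i⟩ ⟨s, j⟩ hts
    induction s using Fin.lastCases with
    | last =>
      induction t using Fin.lastCases with
      | last => simp [extU]
      | cast t => simp [extU]
    | cast s =>
      induction t using Fin.lastCases with
      | last => simp at hts; omega
      | cast t => simpa [extU] using h.2 (t, i) (s, j) (by simpa using hts)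

lemma ext_achievable (h : achievablePair n m T A B Φx Φu) :
    achievablePair n m (T+1) A B (extX n m T A B K Φx) (extU n m T K Φx Φu) := by
  rw [achievable_iff] at h ⊢
  intro δ
  have hδ := h (trunc δ)
  refine ⟨fun i => ?_, fun t i => ?_⟩
  · have := extX_castSucc n m T A B K Φx δ 0 i
    rw [Fin.castSucc_zero] at this
    rw [this, hδ.1]; rfl
  · induction t using Fin.lastCases with
    | last =>
      rw [Fin.succ_last, extX_last]
      simp only [extX_castSucc, extU_last, add_mulVec, ← mulVec_mulVec, Pi.add_apply]
    | cast t =>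
      rw [Fin.succ_castSucc, extX_castSucc, hδ.2]
      simp only [extX_castSucc, extU_castSucc]
      rfl

lemma trunc_assemble (x0 : Fin n → ℝ) (w : Fin (T+1) × Fin n → ℝ) :
    trunc (assemble n (T+1) x0 w) = assemble n T x0 (trunc w) := by
  ext ⟨t, i⟩
  simp [trunc, assemble]

lemma assemble_last (x0 : Fin n → ℝ) (w : Fin (T+1) × Fin n → ℝ) (i : Fin n) :
    assemble n (T+1) x0 w (Fin.last (T+1), i) = w (Fin.last T, i) := by
  simp [assemble]
  rfl

lemma ext_safe (W : Set (Fin n → ℝ))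
    (Zc : Set ((Fin n → ℝ) × (Fin m → ℝ))) (Zf : Set (Fin n → ℝ))
    (hZfK : ∀ x ∈ Zf, (x, K *ᵥ x) ∈ Zc)
    (hZfInv : ∀ x ∈ Zf, ∀ w ∈ W, (A + B * K) *ᵥ x + w ∈ Zf) (x0 : Fin n → ℝ)
    (h : safePair n m T W Zc Zf x0 Φx Φu) :
    safePair n m (T+1) W Zc Zf x0 (extX n m T A B K Φx) (extU n m T K Φx Φu) := by
  intro w hw
  obtain ⟨h1, h2⟩ := h (trunc w) (fun t => hw t.castSucc)
  refine ⟨fun t => ?_, ?_⟩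
  · simp only [extX_castSucc, trunc_assemble]
    induction t using Fin.lastCases with
    | last =>
      simp only [extU_last, trunc_assemble]
      exact hZfK _ h2
    | cast t =>
      simp only [extU_castSucc, trunc_assemble]
      exact h1 t
  · simp only [extX_last, trunc_assemble, assemble_last]
    exact hZfInv _ h2 _ (hw (Fin.last T))
end ext

lemma submatrix_mulVec_succ (n T : ℕ) {ι : Type*} (M : Matrix ι (SIdx n T) ℝ)
    (w : Fin T × Fin n → ℝ) (r : ι) :
    ∑ c : Fin T × Fin n, M r (c.1.succ, c.2) * w c = (M *ᵥ assemble n T 0 w) r := by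
  simp only [mulVec, dotProduct, Fintype.sum_prod_type]
  rw [Fin.sum_univ_succ]
  simp [assemble]

lemma lmi_iff (n m T : ℕ) (A : Matrix (Fin n) (Fin n) ℝ) (B : Matrix (Fin n) (Fin m) ℝ)
    (Q : Matrix (Fin n) (Fin n) ℝ) (R : Matrix (Fin m) (Fin m) ℝ)
    (hQ : Q.PosSemidef) (hR : R.PosDef)
    (P : Matrix (Fin n) (Fin n) ℝ) (hP : P.PosDef) (γ : ℝ)
    (Φx : Matrix (SIdx n T) (SIdx n T) ℝ) (Φu : Matrix (UIdx m T) (SIdx n T) ℝ) :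
    lmiOK n m T A B Q R P γ Φx Φu ↔ ∀ w : Fin T × Fin n → ℝ,
      (Φx *ᵥ assemble n T 0 w) ⬝ᵥ (bigQbar n T Q P *ᵥ (Φx *ᵥ assemble n T 0 w)) +
      (Φu *ᵥ assemble n T 0 w) ⬝ᵥ (bigR m T R *ᵥ (Φu *ᵥ assemble n T 0 w)) ≤
      γ ^ 2 * (w ⬝ᵥ w) + assemble n T 0 w ⬝ᵥ (Cmat n m T A B Q R *ᵥ assemble n T 0 w) := by
  have hC : (Cmat n m T A B Q R)ᵀ = Cmat n m T A B Q R := by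
    rw [← conjTranspose_eq_transpose_of_trivial]
    exact (C_symm (bigF n m T A B) (bigG n T A) _ _ (bigQ_psd n T Q hQ)
      (bigR_pd m T R hR)).eq
  have hqb : (bigQbar n T Q P)ᵀ = bigQbar n T Q P := by
    ext ⟨t, i⟩ ⟨s, j⟩
    have h1 := hQ.1.apply i j
    have h2 := hP.1.apply i j
    simp [bigQbar] at h1 h2 ⊢
    by_cases h : s = t
    · subst h; simp [h1, h2]
    · simp [h, Ne.symm h]
  have hr : (bigR m T R)ᵀ = bigR m T R := by simpa using (bigR_pd m T R hR).1.eq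
  have hS : (bigS n m T Q P R)ᵀ = bigS n m T Q P R := by
    simp [bigS, fromBlocks_transpose, hqb, hr]
  have hst : ∀ w, stackW n m T Φx Φu *ᵥ w =
      Sum.elim (Φx *ᵥ assemble n T 0 w) (Φu *ᵥ assemble n T 0 w) := by
    intro w
    ext r
    cases r with
    | inl p => exact submatrix_mulVec_succ n T Φx w p
    | inr p => exact submatrix_mulVec_succ n T Φu w p
  have hq : ∀ w : Fin T × Fin n → ℝ, w ⬝ᵥ ((γ ^ 2 • (1 : Matrix (Fin T × Fin n) (Fin T × Fin n) ℝ) +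
    (Cmat n m T A B Q R).submatrix
      (fun c : Fin T × Fin n => ((c.1.succ : Fin (T + 1)), c.2))
      (fun c : Fin T × Fin n => ((c.1.succ : Fin (T + 1)), c.2)) -
    (stackW n m T Φx Φu)ᵀ * bigS n m T Q P R * stackW n m T Φx Φu) *ᵥ w) =
      γ ^ 2 * (w ⬝ᵥ w) + assemble n T 0 w ⬝ᵥ (Cmat n m T A B Q R *ᵥ assemble n T 0 w) -
      ((Φx *ᵥ assemble n T 0 w) ⬝ᵥ (bigQbar n T Q P *ᵥ (Φx *ᵥ assemble n T 0 w)) +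
      (Φu *ᵥ assemble n T 0 w) ⬝ᵥ (bigR m T R *ᵥ (Φu *ᵥ assemble n T 0 w))) := by
    intro w
    rw [sub_mulVec, add_mulVec, dotProduct_sub, dotProduct_add]
    congr 1
    · congr 1
      · simp [smul_mulVec]
      · have e : ((Cmat n m T A B Q R).submatrix
            (fun c : Fin T × Fin n => ((c.1.succ : Fin (T + 1)), c.2))
            (fun c : Fin T × Fin n => ((c.1.succ : Fin (T + 1)), c.2))) *ᵥ w =
            fun c => (Cmat n m T A B Q R *ᵥ assemble n T 0 w) (c.1.succ, c.2) := by
          ext c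
          exact submatrix_mulVec_succ n T (Cmat n m T A B Q R) w (c.1.succ, c.2)
        rw [e]
        generalize Cmat n m T A B Q R *ᵥ assemble n T 0 w = v
        simp only [dotProduct, Fintype.sum_prod_type]
        rw [Fin.sum_univ_succ]
        simp [assemble]
    · rw [Matrix.mul_assoc, ← mulVec_mulVec, ← mulVec_mulVec, dotProduct_mulVec, vecMul_transpose,
        hst, bigS, fromBlocks_mulVec]
      simp
  constructor
  · intro h w
    have := h.dotProduct_mulVec_nonneg w
    rw [star_trivial, hq] at this
    linarith
  · intro h
    refine PosSemidef.of_dotProduct_mulVec_nonneg ?_ ?_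
    · unfold IsHermitian
      rw [conjTranspose_eq_transpose_of_trivial]
      simp only [transpose_add, transpose_sub, transpose_smul, transpose_one, transpose_mul,
        transpose_transpose, transpose_submatrix, hC, hS, Matrix.mul_assoc]
    · intro w
      rw [star_trivial, hq]
      linarith [h w]

end Aux17

/-- Monotonicity of the minimum gain function: for every `x` that is feasible at some
performance level, `γ*_{T+1}(x) ≤ max {γ_f, γ*_T(x)}`. -/
theorem stmt17 (n m : ℕ) (hn : 0 < n) (hm : 0 < m)
    (A : Matrix (Fin n) (Fin n) ℝ) (B : Matrix (Fin n) (Fin m) ℝ)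
    (Q : Matrix (Fin n) (Fin n) ℝ) (R : Matrix (Fin m) (Fin m) ℝ)
    (hQ : Q.PosSemidef) (hR : R.PosDef)
    (γf : ℝ) (hγf : 0 < γf)
    (P : Matrix (Fin n) (Fin n) ℝ) (hP : P.PosDef)
    (hγP : (γf ^ 2 • (1 : Matrix (Fin n) (Fin n) ℝ) - P).PosDef)
    (Pbar : Matrix (Fin n) (Fin n) ℝ)
    (hPbar : Pbar = P + P * (γf ^ 2 • (1 : Matrix (Fin n) (Fin n) ℝ) - P)⁻¹ * P)
    (hRic : P = Q + Aᵀ * Pbar * A -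
      Aᵀ * Pbar * B * (R + Bᵀ * Pbar * B)⁻¹ * Bᵀ * Pbar * A)
    (Kf : Matrix (Fin m) (Fin n) ℝ)
    (hKf : Kf = -((R + Bᵀ * Pbar * B)⁻¹ * Bᵀ * Pbar * A))
    (W : Set (Fin n → ℝ)) (hWconv : Convex ℝ W) (hWcomp : IsCompact W)
    (hW0 : (0 : Fin n → ℝ) ∈ interior W)
    (Zc : Set ((Fin n → ℝ) × (Fin m → ℝ))) (hZcl : IsClosed Zc) (hZconv : Convex ℝ Zc)
    (hZ0 : ((0 : Fin n → ℝ), (0 : Fin m → ℝ)) ∈ interior Zc)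
    (Zf : Set (Fin n → ℝ)) (hZfcl : IsClosed Zf) (hZfconv : Convex ℝ Zf)
    (hZf0 : (0 : Fin n → ℝ) ∈ interior Zf)
    (hZfK : ∀ x ∈ Zf, (x, Kf *ᵥ x) ∈ Zc)
    (hZfInv : ∀ x ∈ Zf, ∀ w ∈ W, (A + B * Kf) *ᵥ x + w ∈ Zf)
    (T : ℕ) (hT : 1 ≤ T) (x : Fin n → ℝ)
    (hx : ∃ γ : ℝ, 0 ≤ γ ∧ ∃ Φx Φu, memPi n m T A B Q R P W Zc Zf γ x Φx Φu) :
    gammaStar n m (T + 1) A B Q R P W Zc Zf x ≤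
      max γf (gammaStar n m T A B Q R P W Zc Zf x) := by
  have hmain : ∀ γ : ℝ, 0 ≤ γ → (∃ Φx Φu, memPi n m T A B Q R P W Zc Zf γ x Φx Φu) →
      gammaStar n m (T + 1) A B Q R P W Zc Zf x ≤ max γf γ := by
    rintro γ hγ ⟨Φx, Φu, hc, ha, hs, hl⟩
    refine csInf_le ⟨0, fun y hy => hy.1⟩ ⟨hγ.trans (le_max_right _ _),
      Aux17.extX n m T A B Kf Φx, Aux17.extU n m T Kf Φx Φu,
      Aux17.ext_causal n m T A B Kf Φx Φu hc, Aux17.ext_achievable n m T A B Kf Φx Φu ha,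
      Aux17.ext_safe n m T A B Kf Φx Φu W Zc Zf hZfK hZfInv x hs, ?_⟩
    rw [Aux17.lmi_iff n m _ A B Q R hQ hR P hP] at hl ⊢
    intro w
    have h1 := hl (Aux17.trunc w)
    have h2 := Aux17.C_mono n m T A B Q R hQ hR (assemble n (T+1) 0 w)
    have hg1 : γf ^ 2 ≤ (max γf γ) ^ 2 := pow_le_pow_left₀ hγf.le (le_max_left _ _) 2
    have hg2 : γ ^ 2 ≤ (max γf γ) ^ 2 := pow_le_pow_left₀ hγ (le_max_right _ _) 2
    rw [Aux17.qf_bigQbar, Aux17.qf_bigR] at h1 ⊢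
    rw [Fin.sum_univ_castSucc, Fin.sum_univ_castSucc (n := T)
      (f := fun t => (fun k => (Aux17.extU n m T Kf Φx Φu *ᵥ assemble n (T+1) 0 w) (t, k)) ⬝ᵥ
        (R *ᵥ fun k => (Aux17.extU n m T Kf Φx Φu *ᵥ assemble n (T+1) 0 w) (t, k)))]
    simp only [Aux17.extX_castSucc, Aux17.extX_last, Aux17.extU_castSucc, Aux17.extU_last,
      Aux17.trunc_assemble, Aux17.assemble_last] at h2 ⊢
    have h3 := Aux17.riccati_step n m A B Q R hR γf P hP hγP Pbar hPbar hRic Kf hKf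
      (fun k => (Φx *ᵥ assemble n T 0 (Aux17.trunc w)) (Fin.last T, k))
      (fun k => w (Fin.last T, k))
    have h4 : w ⬝ᵥ w = Aux17.trunc w ⬝ᵥ Aux17.trunc w +
        (fun k => w (Fin.last T, k)) ⬝ᵥ (fun k => w (Fin.last T, k)) := by
      simp only [dotProduct, Fintype.sum_prod_type]
      rw [Fin.sum_univ_castSucc]
      rfl
    have h5 : 0 ≤ Aux17.trunc w ⬝ᵥ Aux17.trunc w :=
      Finset.sum_nonneg fun i _ => mul_self_nonneg _
    have h6 : 0 ≤ (fun k => w (Fin.last T, k)) ⬝ᵥ (fun k => w (Fin.last T, k)) :=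
      Finset.sum_nonneg fun i _ => mul_self_nonneg _
    have h7 := mul_le_mul_of_nonneg_right hg2 h5
    have h8 := mul_le_mul_of_nonneg_right hg1 h6
    rw [h4, mul_add]
    change _ + _ + (((A + B * Kf) *ᵥ fun k =>
      (Φx *ᵥ assemble n T 0 (Aux17.trunc w)) (Fin.last T, k)) + fun k => w (Fin.last T, k)) ⬝ᵥ
      (P *ᵥ (((A + B * Kf) *ᵥ fun k =>
      (Φx *ᵥ assemble n T 0 (Aux17.trunc w)) (Fin.last T, k)) + fun k => w (Fin.last T, k)))
      + (_ + (Kf *ᵥ fun k => (Φx *ᵥ assemble n T 0 (Aux17.trunc w)) (Fin.last T, k)) ⬝ᵥ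
       (R *ᵥ (Kf *ᵥ fun k => (Φx *ᵥ assemble n T 0 (Aux17.trunc w)) (Fin.last T, k)))) ≤ _
    linarith
  by_contra! hlt
  obtain ⟨h1, h2⟩ := max_lt_iff.1 hlt
  obtain ⟨γ, ⟨hγ0, hγ⟩, hγlt⟩ := exists_lt_of_csInf_lt hx h2
  exact absurd (hmain γ hγ0 hγ) (not_le.2 (max_lt h1 hγlt))

end
end
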